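/- arXiv:1812.00963 — 7 statements merged into one kernel-verified Lean document; each statement's English description precedes it below -/
import Mathlib

section
/- Let 1 ≤ i < N and let p be a permutation of size i with p_i = i (so p ends in a left-to-right maximum). Then the number of 231-avoiding permutations π of size N whose i-th prefix flattening equals p and which satisfy π_i = N is equal to the number of 231-avoiding permutations π of size N whose i-th prefix flattening equals p and which satisfy: letting j be the position of the value N in π, j > i and no position m with i < m < j is the position of a left-to-right maximum of π. -/
/-! Write positions and values 0-indexed. If `π` avoids 231 and has its maximum at position `j`,
then every entry before `j` is smaller than every entry after `j`. Applying this twice to a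
permutation `π` with `π k = N - 1`, once at the maximum and once at the second largest entry (at
position `j`, which must come after `k`), gives the block form
`π = α, N - 1, β, N - 2, γ` with `α < β < γ` blockwise; the values of `α, β` are exactly those below
`j - 1` (`FirstShape`). A permutation of the second kind has the form
`σ = α, j - 1, β, N - 1, γ` with `α < β < j - 1 < γ` (`SecondShape`): between `k` and the position
`j` of the maximum there is no left-to-right maximum, so everything there lies below `σ k`.

The two families are exchanged by composing on the left with the cycle `j - 1 → j → ⋯ → N - 1 → j - 1`
of values (`cyc`). It only moves the entry at position `k` relative to the others, so it preserves the
prefix pattern and 231-avoidance, and `j` can be read off from either side. -/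

/-- One-line notation: `π i` is the (0-indexed) rank of the candidate at (0-indexed) position `i`.
`π` avoids the pattern 231 if no three positions carry entries in the relative order 2,3,1. -/
def Avoids231 {N : ℕ} (π : Fin N → Fin N) : Prop :=
  ¬ ∃ i j k : Fin N, i < j ∧ j < k ∧ π k < π i ∧ π i < π j

def Avoids132 {N : ℕ} (π : Fin N → Fin N) : Prop :=
  ¬ ∃ i j k : Fin N, i < j ∧ j < k ∧ π i < π k ∧ π k < π j

def Avoids321 {N : ℕ} (π : Fin N → Fin N) : Prop :=
  ¬ ∃ i j k : Fin N, i < j ∧ j < k ∧ π k < π j ∧ π j < π i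

def Avoids312 {N : ℕ} (π : Fin N → Fin N) : Prop :=
  ¬ ∃ i j k : Fin N, i < j ∧ j < k ∧ π j < π k ∧ π k < π i

def Avoids123 {N : ℕ} (π : Fin N → Fin N) : Prop :=
  ¬ ∃ i j k : Fin N, i < j ∧ j < k ∧ π i < π j ∧ π j < π k

def Avoids213 {N : ℕ} (π : Fin N → Fin N) : Prop :=
  ¬ ∃ i j k : Fin N, i < j ∧ j < k ∧ π j < π i ∧ π i < π k

/-- The entry at position `m` is a left-to-right maximum. -/
def IsLRMax {N : ℕ} (π : Fin N → Fin N) (m : Fin N) : Prop :=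
  ∀ l, l < m → π l < π m

/-- The flattening of the first `k` entries of `π`: the unique length-`k` sequence
on values `0,…,k-1` in the same relative order. -/
def flatten {N : ℕ} (π : Fin N → Fin N) {k : ℕ} (h : k ≤ N) : Fin k → Fin k :=
  fun a =>
    ⟨(Finset.univ.filter (fun b : Fin k => π (Fin.castLE h b) < π (Fin.castLE h a))).card, by
      have hlt : (Finset.univ.filter
          (fun b : Fin k => π (Fin.castLE h b) < π (Fin.castLE h a))).card <
          (Finset.univ : Finset (Fin k)).card := by
        apply Finset.card_lt_card
        rw [Finset.ssubset_univ_iff]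
        intro hEq
        have ha : a ∈ Finset.univ.filter
            (fun b : Fin k => π (Fin.castLE h b) < π (Fin.castLE h a)) := by
          rw [hEq]; exact Finset.mem_univ a
        simp at ha
      simpa using hlt⟩

/-- The `k`-th prefix flattenings of `π` and `τ` agree. -/
def PrefixEq {N M : ℕ} (π : Fin N → Fin N) (τ : Fin M → Fin M) (k : ℕ)
    (hN : k ≤ N) (hM : k ≤ M) : Prop :=
  ∀ a b : Fin k,
    (π (Fin.castLE hN a) < π (Fin.castLE hN b) ↔ τ (Fin.castLE hM a) < τ (Fin.castLE hM b))

/-- A strategy assigns accept/reject to every prefix flattening. -/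
def Strategy : Type := ∀ k : ℕ, (Fin k → Fin k) → Bool

/-- Playing strategy `s` on `π`, the player stops at (1-indexed) position `i`:
`i` is the least index whose prefix flattening `s` accepts, or `N` if there is none. -/
def StopsAt {N : ℕ} (s : Strategy) (π : Fin N → Fin N) (i : ℕ) : Prop :=
  1 ≤ i ∧ ∃ h : i ≤ N,
    (s i (flatten π h) = true ∨ i = N) ∧
    ∀ j, 1 ≤ j → j < i → ∀ hj : j ≤ N, s j (flatten π hj) = false

/-- Strategy `s` wins `π` if the entry at its stopping position is the maximum value. -/
def Wins {N : ℕ} (s : Strategy) (π : Fin N → Fin N) : Prop :=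
  ∃ i, StopsAt s π i ∧ ∃ h1 : i - 1 < N, ∃ h2 : N - 1 < N, π ⟨i - 1, h1⟩ = ⟨N - 1, h2⟩

/-! ### The cycle of values -/

/-- The cycle `t → t + 1 → ⋯ → N - 1 → t` on `Fin N`, fixing everything below `t`. -/
def cyc {N : ℕ} (t : Fin N) : Equiv.Perm (Fin N) where
  toFun v := if v.val < t.val then v else if h : v.val + 1 < N then ⟨v.val + 1, h⟩ else t
  invFun v := if v.val < t.val then v else if v.val = t.val then ⟨N - 1, by have := v.isLt; omega⟩
    else ⟨v.val - 1, by have := v.isLt; omega⟩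
  left_inv v := by
    ext
    dsimp only
    grind
  right_inv v := by
    ext
    dsimp only
    grind

theorem cyc_val {N : ℕ} (t v : Fin N) : (cyc t v).val =
    if v.val < t.val then v.val else if v.val + 1 < N then v.val + 1 else t.val := by
  simp only [cyc, Equiv.coe_fn_mk]
  split_ifs <;> rfl

theorem cyc_symm_val {N : ℕ} (t v : Fin N) : ((cyc t).symm v).val =
    if v.val < t.val then v.val else if v.val = t.val then N - 1 else v.val - 1 := by
  simp only [cyc, Equiv.coe_fn_symm_mk]
  split_ifs <;> rfl

/-! ### Block forms of the two families -/

/-- `π = α, N - 1, β, N - 2, γ` with `N - 1` at position `k`, `N - 2` at position `j`,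
and `α, β` below `j - 1 ≤ γ`. -/
structure FirstShape {N : ℕ} (π : Equiv.Perm (Fin N)) (k j : Fin N) : Prop where
  lt : k.val < j.val
  atk : (π k).val = N - 1
  atj : (π j).val = N - 2
  before : ∀ i : Fin N, i < j → i ≠ k → (π i).val < j.val - 1
  after : ∀ i : Fin N, j < i → j.val - 1 ≤ (π i).val ∧ (π i).val < N - 2

/-- `π = α, j - 1, β, N - 1, γ` with `j - 1` at position `k`, `N - 1` at position `j`,
and `α, β` below `j - 1`, while `γ` is at least `j`. -/
structure SecondShape {N : ℕ} (π : Equiv.Perm (Fin N)) (k j : Fin N) : Prop where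
  lt : k.val < j.val
  atk : (π k).val = j.val - 1
  atj : (π j).val = N - 1
  before : ∀ i : Fin N, i < j → i ≠ k → (π i).val < j.val - 1
  after : ∀ i : Fin N, j < i → j.val ≤ (π i).val ∧ (π i).val < N - 1

/-- If the entries at positions in `S` are all smaller than the remaining entries, they are
exactly the entries with values below `S.card`. -/
theorem mem_iff_of_lower {N : ℕ} (π : Equiv.Perm (Fin N)) (S : Finset (Fin N))
    (h : ∀ i ∈ S, ∀ l, l ∉ S → π i < π l) (i : Fin N) : i ∈ S ↔ (π i).val < S.card := by
  constructor
  · intro hi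
    have hsub : Finset.Iic (π i) ⊆ S.map π.toEmbedding := by
      intro v hv
      rw [Finset.mem_map]
      refine ⟨π.symm v, ?_, by simp⟩
      by_contra hn
      have := h i hi _ hn
      simp only [Equiv.apply_symm_apply] at this
      exact absurd (Finset.mem_Iic.1 hv) (not_le.2 this)
    have := Finset.card_le_card hsub
    simp only [Fin.card_Iic, Finset.card_map] at this
    omega
  · intro hi
    by_contra hn
    have hsub : S.map π.toEmbedding ⊆ Finset.Iio (π i) := by
      intro v hv
      obtain ⟨l, hl, rfl⟩ := Finset.mem_map.1 hv
      exact Finset.mem_Iio.2 (h l hl i hn)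
    have := Finset.card_le_card hsub
    simp only [Fin.card_Iio, Finset.card_map] at this
    omega

theorem card_Iio_erase {N : ℕ} {k j : Fin N} (h : k < j) :
    ((Finset.Iio j).erase k).card = j.val - 1 := by
  rw [Finset.card_erase_of_mem (Finset.mem_Iio.2 h), Fin.card_Iio]

theorem val_ne {N : ℕ} (π : Equiv.Perm (Fin N)) {a b : Fin N} (h : a ≠ b) :
    (π a).val ≠ (π b).val := fun e => h (π.injective (Fin.ext e))

theorem firstShape_of {N : ℕ} {π : Equiv.Perm (Fin N)} (hav : Avoids231 π) (k j : Fin N)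
    (hk : k.val + 1 < N) (hπk : (π k).val = N - 1) (hπj : (π j).val = N - 2) :
    FirstShape π k j := by
  have hjk : j ≠ k := by rintro rfl; omega
  have hlt : k < j := by
    by_contra hn
    have h1 : j < k := lt_of_le_of_ne (not_lt.1 hn) hjk
    -- An entry after `k` completes `N - 2, N - 1` to the pattern 231.
    have h2 : k < (⟨k.val + 1, hk⟩ : Fin N) := by simp [Fin.lt_def]
    refine hav ⟨j, k, _, h1, h2, ?_, ?_⟩
    · have := val_ne π h2.ne'
      have := val_ne π (h1.trans h2).ne'
      rw [Fin.lt_def]; omega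
    · rw [Fin.lt_def]; omega
  have hlow : ∀ i ∈ (Finset.Iio j).erase k, ∀ l, l ∉ (Finset.Iio j).erase k → π i < π l := by
    intro i hi l hl
    simp only [Finset.mem_erase, Finset.mem_Iio, not_and_or, not_not, not_lt] at hi hl
    have h1 := val_ne π hi.1
    have h2 := val_ne π hi.2.ne
    rw [Fin.lt_def]
    by_cases hlk : l = k
    · subst hlk; omega
    by_cases hlj : l = j
    · subst hlj; omega
    have hl' : j < l := lt_of_le_of_ne (hl.resolve_left hlk) (Ne.symm hlj)
    by_contra hn
    have := val_ne π (hi.2.trans hl').ne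
    refine hav ⟨i, j, l, hi.2, hl', ?_, ?_⟩ <;> rw [Fin.lt_def] <;> omega
  have hmem := mem_iff_of_lower π _ hlow
  rw [card_Iio_erase hlt] at hmem
  refine ⟨hlt, hπk, hπj, fun i hi hik => (hmem i).1 (by simp [hi, hik]), fun i hi => ?_⟩
  have h1 : ¬ _ := mt (hmem i).2 (by simp [hi.le])
  have := val_ne π hi.ne'
  have := val_ne π (hlt.trans hi).ne'
  omega

theorem secondShape_of {N : ℕ} {π : Equiv.Perm (Fin N)} (hav : Avoids231 π) (k j : Fin N)
    (hlt : k < j) (hπj : (π j).val = N - 1) (hbef : ∀ i, i < k → π i < π k)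
    (hlr : ∀ m : Fin N, k < m → m < j → ¬ IsLRMax π m) : SecondShape π k j := by
  have hmid : ∀ n : ℕ, ∀ m : Fin N, m.val = n → k < m → m < j → π m < π k := by
    intro n
    induction n using Nat.strong_induction_on with
    | _ n ih =>
      rintro m rfl hkm hmj
      by_contra hn
      have hgt : π k < π m := lt_of_le_of_ne (not_lt.1 hn) (fun e => hkm.ne (π.injective e))
      refine hlr m hkm hmj fun l hl => ?_
      rcases lt_trichotomy l k with h | rfl | h
      · exact (hbef l h).trans hgt
      · exact hgt
      · exact (ih l hl l rfl h (hl.trans hmj)).trans hgt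
  have hk' : ∀ i, i < j → i ≠ k → π i < π k := fun i hi hik =>
    (lt_or_gt_of_ne hik).elim (hbef i) (fun h => hmid _ i rfl h hi)
  have hlow : ∀ i ∈ Finset.Iio j, ∀ l, l ∉ Finset.Iio j → π i < π l := by
    intro i hi l hl
    simp only [Finset.mem_Iio, not_lt] at hi hl
    have h2 := val_ne π hi.ne
    rw [Fin.lt_def]
    by_cases hlj : l = j
    · subst hlj; omega
    have hl' : j < l := lt_of_le_of_ne hl (Ne.symm hlj)
    by_contra hn
    have := val_ne π (hi.trans hl').ne
    refine hav ⟨i, j, l, hi, hl', ?_, ?_⟩ <;> rw [Fin.lt_def] <;> omega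
  have hlow' : ∀ i ∈ (Finset.Iio j).erase k, ∀ l, l ∉ (Finset.Iio j).erase k → π i < π l := by
    intro i hi l hl
    rw [Finset.mem_erase] at hi hl
    by_cases hlk : l = k
    · subst hlk; exact hk' i (Finset.mem_Iio.1 hi.2) hi.1
    · exact hlow i hi.2 l (fun h => hl ⟨hlk, h⟩)
  have hmem := mem_iff_of_lower π _ hlow
  have hmem' := mem_iff_of_lower π _ hlow'
  rw [card_Iio_erase hlt] at hmem'
  rw [Fin.card_Iio] at hmem
  refine ⟨hlt, ?_, hπj, fun i hi hik => (hmem' i).1 (by simp [hi, hik]), fun i hi => ?_⟩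
  · have h1 := (hmem k).1 (by simpa using hlt)
    have h2 : ¬ _ := mt (hmem' k).2 (by simp)
    omega
  · have h1 : ¬ _ := mt (hmem i).2 (by simp [hi.le])
    have := val_ne π hi.ne'
    omega

/-! ### Transport along the cycle -/

/-- `π` has the first shape, `σ` the second, for the same `k` and `j`, and they order the entries
at positions other than `k` in the same way. -/
structure Linked {N : ℕ} (π σ : Equiv.Perm (Fin N)) (k j : Fin N) : Prop where
  first : FirstShape π k j
  second : SecondShape σ k j
  lt_iff : ∀ a b : Fin N, a ≠ k → b ≠ k → (π a < π b ↔ σ a < σ b)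

theorem FirstShape.linked {N : ℕ} {π : Equiv.Perm (Fin N)} {k j t : Fin N}
    (h : FirstShape π k j) (ht : t.val = j.val - 1) : Linked π (cyc t * π) k j := by
  have hlt := h.lt
  have hk := h.atk
  have hj := h.atj
  refine ⟨h, ⟨hlt, ?_, ?_, ?_, ?_⟩, ?_⟩
  · rw [Equiv.Perm.mul_apply, cyc_val]; split_ifs <;> omega
  · rw [Equiv.Perm.mul_apply, cyc_val]; split_ifs <;> omega
  · intro i hi hik
    have := h.before i hi hik
    rw [Equiv.Perm.mul_apply, cyc_val]; split_ifs <;> omega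
  · intro i hi
    have := h.after i hi
    rw [Equiv.Perm.mul_apply, cyc_val]; split_ifs <;> omega
  · intro a b ha hb
    have := val_ne π ha
    have := val_ne π hb
    rw [Equiv.Perm.mul_apply, Equiv.Perm.mul_apply, Fin.lt_def, Fin.lt_def, cyc_val, cyc_val]
    split_ifs <;> omega

theorem SecondShape.linked {N : ℕ} {σ : Equiv.Perm (Fin N)} {k j t : Fin N}
    (h : SecondShape σ k j) (ht : t.val = j.val - 1) : Linked ((cyc t)⁻¹ * σ) σ k j := by
  have hlt := h.lt
  have hk := h.atk
  have hj := h.atj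
  refine ⟨⟨hlt, ?_, ?_, ?_, ?_⟩, h, ?_⟩
  · rw [Equiv.Perm.mul_apply, Equiv.Perm.inv_def, cyc_symm_val]; split_ifs <;> omega
  · rw [Equiv.Perm.mul_apply, Equiv.Perm.inv_def, cyc_symm_val]; split_ifs <;> omega
  · intro i hi hik
    have := h.before i hi hik
    rw [Equiv.Perm.mul_apply, Equiv.Perm.inv_def, cyc_symm_val]; split_ifs <;> omega
  · intro i hi
    have := h.after i hi
    rw [Equiv.Perm.mul_apply, Equiv.Perm.inv_def, cyc_symm_val]; split_ifs <;> omega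
  · intro a b ha hb
    have := val_ne σ ha
    have := val_ne σ hb
    rw [Equiv.Perm.mul_apply, Equiv.Perm.mul_apply, Equiv.Perm.inv_def, Fin.lt_def, Fin.lt_def,
      cyc_symm_val, cyc_symm_val]
    split_ifs <;> omega

namespace Linked

variable {N : ℕ} {π σ : Equiv.Perm (Fin N)} {k j : Fin N}

/-- Among the positions up to `k` the entry at `k` is the largest in both permutations. -/
theorem prefix_lt_iff (h : Linked π σ k j) (a b : Fin N) (ha : a ≤ k) (hb : b ≤ k) :
    π a < π b ↔ σ a < σ b := by
  have hkj : k < j := h.first.lt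
  have hmax : ∀ i, i ≤ k → i ≠ k → π i < π k ∧ σ i < σ k := by
    intro i hi hik
    have h1 := h.first.before i (hi.trans_lt hkj) hik
    have h2 := h.second.before i (hi.trans_lt hkj) hik
    have h3 := h.first.atk
    have h4 := h.second.atk
    rw [Fin.lt_def, Fin.lt_def]
    omega
  by_cases hak : a = k
  · subst hak
    by_cases hbk : b = a
    · subst hbk; simp
    · exact iff_of_false (hmax b hb hbk).1.not_gt (hmax b hb hbk).2.not_gt
  · by_cases hbk : b = k
    · subst hbk; exact iff_of_true (hmax a ha hak).1 (hmax a ha hak).2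
    · exact h.lt_iff a b hak hbk

theorem prefixEq_iff (h : Linked π σ k j) {M : ℕ} (p : Fin M → Fin M) (hN : k.val + 1 ≤ N)
    (hM : k.val + 1 ≤ M) : PrefixEq π p (k.val + 1) hN hM ↔ PrefixEq σ p (k.val + 1) hN hM := by
  refine forall_congr' fun a => forall_congr' fun b => ?_
  rw [h.prefix_lt_iff (Fin.castLE hN a) (Fin.castLE hN b)
    (by rw [Fin.le_def, Fin.val_castLE]; omega) (by rw [Fin.le_def, Fin.val_castLE]; omega)]

theorem avoids_iff (h : Linked π σ k j) : Avoids231 π ↔ Avoids231 σ := by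
  refine not_congr ⟨?_, ?_⟩
  · rintro ⟨a, b, c, hab, hbc, h1, h2⟩
    refine ⟨a, b, c, hab, hbc, ?_⟩
    have hkj : k < j := h.first.lt
    have hk := h.first.atk
    -- The maximum `π k` can only play the role of the 3.
    have hak : a ≠ k := by rintro rfl; rw [Fin.lt_def] at h2; omega
    have hck : c ≠ k := by rintro rfl; rw [Fin.lt_def] at h1; omega
    refine ⟨(h.lt_iff c a hck hak).1 h1, ?_⟩
    by_cases hbk : b = k
    · subst hbk
      exact (h.prefix_lt_iff a b hab.le le_rfl).1 h2
    · exact (h.lt_iff a b hak hbk).1 h2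
  · rintro ⟨a, b, c, hab, hbc, h1, h2⟩
    refine ⟨a, b, c, hab, hbc, ?_⟩
    have hkj : k < j := h.first.lt
    have hk := h.second.atk
    -- Entries larger than `σ k` sit at `j` or later, smaller ones sit before `j`.
    have hak : a ≠ k := by
      rintro rfl
      have hb : j ≤ b := by
        by_contra hn
        have := h.second.before b (not_le.1 hn) hab.ne'
        rw [Fin.lt_def] at h2; omega
      have := h.second.after c (hb.trans_lt hbc)
      rw [Fin.lt_def] at h1; omega
    have hck : c ≠ k := by
      rintro rfl
      have := h.second.before a ((hab.trans hbc).trans hkj) hak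
      rw [Fin.lt_def] at h1; omega
    refine ⟨(h.lt_iff c a hck hak).2 h1, ?_⟩
    by_cases hbk : b = k
    · subst hbk
      exact (h.prefix_lt_iff a b hab.le le_rfl).2 h2
    · exact (h.lt_iff a b hak hbk).2 h2

end Linked

/-! ### The bijection -/

theorem symm_eq_of_val {N : ℕ} {π : Equiv.Perm (Fin N)} {j v : Fin N} (h : (π j).val = v.val) :
    π.symm v = j := by
  rw [Equiv.symm_apply_eq]; exact (Fin.ext h).symm

/-- A prefix pattern ending in its maximum makes `π k` exceed all earlier entries. -/
theorem lt_of_prefixEq {N k : ℕ} {π : Equiv.Perm (Fin N)} {p : Equiv.Perm (Fin (k + 1))}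
    (hp : p (Fin.last k) = Fin.last k) {hN : k + 1 ≤ N} {hM : k + 1 ≤ k + 1}
    (h : PrefixEq π p (k + 1) hN hM) (i : Fin N) (hi : i.val < k) :
    π i < π ⟨k, hN⟩ := by
  refine (h ⟨i.val, by omega⟩ (Fin.last k)).2 ?_
  simp only [Fin.castLE_rfl, id_eq, hp]
  refine Fin.lt_last_iff_ne_last.2 fun e => ?_
  have := congrArg Fin.val (p.injective (e.trans hp.symm))
  simp at this
  omega

/-- for a size-`k+1` eligible prefix `p` (ending in its maximum) of 231-avoiding
interviews of size `N`, the number of `p`-winnable permutations (max `N` at position `k+1`,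
1-indexed) equals the number of permutations with prefix `p` whose maximum occurs later with
no left-to-right maximum strictly in between. -/
theorem stmt1 {N k : ℕ} (hk : k + 1 < N) (p : Equiv.Perm (Fin (k + 1)))
    (hp : p (Fin.last k) = Fin.last k) :
    Nat.card {π : Equiv.Perm (Fin N) //
        Avoids231 ⇑π ∧ PrefixEq ⇑π ⇑p (k + 1) (by omega) (le_refl _) ∧
        π ⟨k, by omega⟩ = ⟨N - 1, by omega⟩} =
    Nat.card {π : Equiv.Perm (Fin N) //
        Avoids231 ⇑π ∧ PrefixEq ⇑π ⇑p (k + 1) (by omega) (le_refl _) ∧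
        k < (π.symm ⟨N - 1, by omega⟩).val ∧
        ∀ m : Fin N, k < m.val → m.val < (π.symm ⟨N - 1, by omega⟩).val →
          ¬ IsLRMax ⇑π m} := by
  have first : ∀ π : Equiv.Perm (Fin N), Avoids231 π → π ⟨k, by omega⟩ = ⟨N - 1, by omega⟩ →
      FirstShape π ⟨k, by omega⟩ (π.symm ⟨N - 2, by omega⟩) := fun π h1 h2 =>
    firstShape_of h1 _ _ hk (by rw [h2]) (by simp)
  have second : ∀ σ : Equiv.Perm (Fin N),
      (Avoids231 σ ∧ PrefixEq σ p (k + 1) (by omega) (le_refl _) ∧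
        k < (σ.symm ⟨N - 1, by omega⟩).val ∧
        ∀ m : Fin N, k < m.val → m.val < (σ.symm ⟨N - 1, by omega⟩).val → ¬ IsLRMax σ m) →
      SecondShape σ ⟨k, by omega⟩ (σ.symm ⟨N - 1, by omega⟩) := fun σ h =>
    secondShape_of h.1 _ _ h.2.2.1 (by simp) (fun i hi => lt_of_prefixEq hp h.2.1 i hi)
      (fun m hm hm' => h.2.2.2 m hm hm')
  refine Nat.card_congr
    { toFun := fun π => ⟨cyc ⟨(π.1.symm ⟨N - 2, by omega⟩).val - 1, by omega⟩ * π.1, ?_⟩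
      invFun := fun σ => ⟨(cyc ⟨(σ.1.symm ⟨N - 1, by omega⟩).val - 1, by omega⟩)⁻¹ * σ.1, ?_⟩
      left_inv := ?_
      right_inv := ?_ }
  · obtain ⟨π, h1, h2, h3⟩ := π
    have L := (first π h1 h3).linked
      (t := ⟨(π.symm ⟨N - 2, by omega⟩).val - 1, by omega⟩) rfl
    have hpos := symm_eq_of_val (v := ⟨N - 1, by omega⟩) L.second.atj
    refine ⟨L.avoids_iff.1 h1, (L.prefixEq_iff p _ _).1 h2, ?_⟩
    dsimp only
    rw [hpos]
    refine ⟨L.second.lt, fun m hm hm' hlr => ?_⟩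
    have h4 := hlr ⟨k, by omega⟩ hm
    have h5 := L.second.before m hm' (by rintro rfl; simp at hm)
    have h6 := L.second.atk
    rw [Fin.lt_def] at h4
    omega
  · obtain ⟨σ, h⟩ := σ
    have L := (second σ h).linked
      (t := ⟨(σ.symm ⟨N - 1, by omega⟩).val - 1, by omega⟩) rfl
    exact ⟨L.avoids_iff.2 h.1, (L.prefixEq_iff p _ _).2 h.2.1, Fin.ext L.first.atk⟩
  · rintro ⟨π, h1, h2, h3⟩
    have L := (first π h1 h3).linked
      (t := ⟨(π.symm ⟨N - 2, by omega⟩).val - 1, by omega⟩) rfl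
    have hpos := symm_eq_of_val (v := ⟨N - 1, by omega⟩) L.second.atj
    apply Subtype.ext
    dsimp only
    simp only [hpos, inv_mul_cancel_left]
  · rintro ⟨σ, h⟩
    have L := (second σ h).linked
      (t := ⟨(σ.symm ⟨N - 1, by omega⟩).val - 1, by omega⟩) rfl
    have hpos := symm_eq_of_val (v := ⟨N - 2, by omega⟩) L.first.atj
    apply Subtype.ext
    dsimp only
    simp only [hpos, mul_inv_cancel_left]
end

section
/- For every N ≥ 1 and every k with 0 ≤ k ≤ N−1, the number of 231-avoiding permutations π of size N satisfying the following condition equals the Catalan number C_{N−1}: letting j be the position of the value N in π, one has j > k and no position m with k < m < j is the position of a left-to-right maximum of π. (In other words, every positional strategy — reject the first k candidates and accept the next left-to-right maximum — wins exactly C_{N−1} of the C_N 231-avoiding interview orders.) -/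
/-- The positional strategy with cutoff `k` (reject the first `k` candidates, accept the next
left-to-right maximum) wins `π`: the maximum value lies at a 0-indexed position `≥ k` and no
position in between (0-indexed `≥ k`) is a left-to-right maximum. -/
def PosWin {N : ℕ} (hN : 0 < N) (k : ℕ) (π : Equiv.Perm (Fin N)) : Prop :=
  k ≤ (π.symm ⟨N - 1, by omega⟩).val ∧
  ∀ m : Fin N, k ≤ m.val → m.val < (π.symm ⟨N - 1, by omega⟩).val → ¬ IsLRMax ⇑π m

/-! ### Splitting at the maximum -/

/-- The permutation of size `p + r + 1` consisting of `L`, then the maximum, then `R` shifted up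
by `p`. -/
def glue {p r : ℕ} (L : Equiv.Perm (Fin p)) (R : Equiv.Perm (Fin r)) :
    Equiv.Perm (Fin (p + r + 1)) :=
  (finSuccEquiv' (⟨p, by omega⟩ : Fin (p + r + 1))).trans
    ((Equiv.optionCongr (finSumFinEquiv.symm.trans
      ((Equiv.sumCongr L R).trans finSumFinEquiv))).trans
      (finSuccEquiv' (Fin.last (p + r))).symm)

lemma glue_apply {p r : ℕ} (L : Equiv.Perm (Fin p)) (R : Equiv.Perm (Fin r))
    (m : Fin (p + r + 1)) :
    glue L R m = (finSuccEquiv' (Fin.last (p + r))).symm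
      ((finSuccEquiv' (⟨p, by omega⟩ : Fin (p + r + 1)) m).map
        fun x => finSumFinEquiv (Equiv.sumCongr L R (finSumFinEquiv.symm x))) := rfl

lemma glue_left {p r : ℕ} (L : Equiv.Perm (Fin p)) (R : Equiv.Perm (Fin r)) (i : Fin p) :
    (glue L R ⟨i, by omega⟩).val = (L i).val := by
  have h : (⟨i, by omega⟩ : Fin (p + r + 1)) =
      (⟨p, by omega⟩ : Fin (p + r + 1)).succAbove (Fin.castAdd r i) := by
    ext
    simp [Fin.succAbove, Fin.lt_def]
  rw [h]
  simp [glue_apply]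

lemma glue_mid {p r : ℕ} (L : Equiv.Perm (Fin p)) (R : Equiv.Perm (Fin r)) :
    (glue L R ⟨p, by omega⟩).val = p + r := by
  simp [glue_apply]

lemma glue_right {p r : ℕ} (L : Equiv.Perm (Fin p)) (R : Equiv.Perm (Fin r)) (i : Fin r) :
    (glue L R ⟨p + 1 + i, by omega⟩).val = p + (R i).val := by
  have h : (⟨p + 1 + i, by omega⟩ : Fin (p + r + 1)) =
      (⟨p, by omega⟩ : Fin (p + r + 1)).succAbove (Fin.natAdd p i) := by
    ext
    simp [Fin.succAbove, Fin.lt_def]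
    omega
  rw [h]
  simp [glue_apply]

lemma position_cases {p r : ℕ} (m : Fin (p + r + 1)) :
    (∃ i : Fin p, m = ⟨i, by omega⟩) ∨ m = ⟨p, by omega⟩ ∨
      ∃ i : Fin r, m = ⟨p + 1 + i, by omega⟩ := by
  rcases lt_trichotomy m.val p with h | h | h
  · exact Or.inl ⟨⟨m, h⟩, rfl⟩
  · exact Or.inr (Or.inl (Fin.ext h))
  · refine Or.inr (Or.inr ⟨⟨m - (p + 1), by omega⟩, ?_⟩)
    ext
    simp
    omega

lemma glue_avoids {p r : ℕ} (L : Equiv.Perm (Fin p)) (R : Equiv.Perm (Fin r)) :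
    Avoids231 (glue L R) ↔ Avoids231 L ∧ Avoids231 R := by
  constructor
  · intro h
    constructor
    · rintro ⟨i, j, k, hij, hjk, h1, h2⟩
      refine h ⟨⟨i, by omega⟩, ⟨j, by omega⟩, ⟨k, by omega⟩, hij, hjk, ?_, ?_⟩
      · rw [Fin.lt_def, glue_left, glue_left]; exact h1
      · rw [Fin.lt_def, glue_left, glue_left]; exact h2
    · rintro ⟨i, j, k, hij, hjk, h1, h2⟩
      refine h ⟨⟨p + 1 + i, by omega⟩, ⟨p + 1 + j, by omega⟩, ⟨p + 1 + k, by omega⟩, ?_, ?_, ?_, ?_⟩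
      · rw [Fin.lt_def] at *; simp; omega
      · rw [Fin.lt_def] at *; simp; omega
      · rw [Fin.lt_def, glue_right, glue_right]; rw [Fin.lt_def] at h1; omega
      · rw [Fin.lt_def, glue_right, glue_right]; rw [Fin.lt_def] at h2; omega
  · rintro ⟨hL, hR⟩ ⟨i, j, k, hij, hjk, h1, h2⟩
    rw [Fin.lt_def] at hij hjk h1 h2
    rcases position_cases i with ⟨a, rfl⟩ | rfl | ⟨a, rfl⟩ <;>
    rcases position_cases j with ⟨b, rfl⟩ | rfl | ⟨b, rfl⟩ <;>
    rcases position_cases k with ⟨c, rfl⟩ | rfl | ⟨c, rfl⟩ <;>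
    simp only [glue_left, glue_right, glue_mid] at hij hjk h1 h2 <;>
    first
      | omega
      | exact hL ⟨a, b, c, hij, hjk, h1, h2⟩
      | exact hR ⟨a, b, c, by rw [Fin.lt_def]; omega, by rw [Fin.lt_def]; omega,
          by rw [Fin.lt_def]; omega, by rw [Fin.lt_def]; omega⟩

lemma glue_injective {p r : ℕ} {L L' : Equiv.Perm (Fin p)} {R R' : Equiv.Perm (Fin r)}
    (h : glue L R = glue L' R') : L = L' ∧ R = R' := by
  constructor
  · ext i
    rw [← glue_left L R i, h, glue_left]
  · ext i
    have := glue_right L R i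
    rw [h, glue_right] at this
    omega

/-- Avoiding 231 forces the entries before the maximum to be the `p` smallest values: any entry
after the maximum exceeds any entry before it. -/
lemma exists_glue {p r : ℕ} (π : Equiv.Perm (Fin (p + r + 1))) (hav : Avoids231 π)
    (hp : π ⟨p, by omega⟩ = Fin.last (p + r)) : ∃ L R, glue L R = π := by
  have hlt : ∀ i : Fin (p + r + 1), i.val ≠ p → (π i).val < p + r := by
    intro i hi
    have h1 : π i ≠ Fin.last (p + r) := by
      rw [← hp]
      intro h
      exact hi (congrArg Fin.val (π.injective h))
    have h2 : (π i).val ≠ p + r := fun h => h1 (Fin.ext h)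
    omega
  have hcross : ∀ i j : Fin (p + r + 1), i.val < p → p < j.val → (π i).val < (π j).val := by
    intro i j hi hj
    by_contra hc
    have hne : (π i).val ≠ (π j).val := by
      intro h
      have := congrArg Fin.val (π.injective (Fin.ext h))
      omega
    refine hav ⟨i, ⟨p, by omega⟩, j, hi, hj, ?_, ?_⟩
    · rw [Fin.lt_def]; omega
    · rw [hp, Fin.lt_def]; exact hlt i (by omega)
  -- The `r` later entries have distinct values strictly between `π i` and `p + r`.
  have hleft : ∀ i : Fin p, (π ⟨i, by omega⟩).val < p := by
    intro i
    have hc := Finset.card_le_card_of_injOn (s := (Finset.univ : Finset (Fin r)))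
      (t := Finset.Ioo (π ⟨i, by omega⟩).val (p + r))
      (fun j => (π ⟨p + 1 + j, by omega⟩).val)
      (by
        intro j _
        simp only [Finset.coe_Ioo, Set.mem_Ioo]
        exact ⟨hcross _ _ i.2 (by simp; omega), hlt _ (by simp; omega)⟩)
      (by
        intro a _ b _ h
        have := congrArg Fin.val (π.injective (Fin.ext h))
        ext
        simp at this
        omega)
    have := hlt ⟨i, by omega⟩ (by simp; omega)
    simp at hc
    have hi := i.2
    omega
  -- The `p` earlier entries have distinct values below `π (p + 1 + i)`.
  have hright : ∀ i : Fin r, p ≤ (π ⟨p + 1 + i, by omega⟩).val := by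
    intro i
    have hc := Finset.card_le_card_of_injOn (s := (Finset.univ : Finset (Fin p)))
      (t := Finset.range (π ⟨p + 1 + i, by omega⟩).val)
      (fun j => (π ⟨j, by omega⟩).val)
      (by
        intro j _
        simp only [Finset.coe_range, Set.mem_Iio]
        exact hcross _ _ j.2 (by simp; omega))
      (by
        intro a _ b _ h
        have := congrArg Fin.val (π.injective (Fin.ext h))
        ext
        simpa using this)
    simpa using hc
  have hrlt : ∀ i : Fin r, (π ⟨p + 1 + i, by omega⟩).val < p + r :=
    fun i => hlt _ (by simp; omega)
  let f : Fin p → Fin p := fun i => ⟨(π ⟨i, by omega⟩).val, hleft i⟩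
  let g : Fin r → Fin r := fun i => ⟨(π ⟨p + 1 + i, by omega⟩).val - p, by
    have := hright i
    have := hrlt i
    omega⟩
  have hf : Function.Injective f := by
    intro a b h
    have h1 : (π ⟨a, by omega⟩).val = (π ⟨b, by omega⟩).val := congrArg (fun x : Fin p => x.val) h
    have := congrArg Fin.val (π.injective (Fin.ext h1))
    ext
    simpa using this
  have hg : Function.Injective g := by
    intro a b h
    have h1 : (π ⟨p + 1 + a, by omega⟩).val - p = (π ⟨p + 1 + b, by omega⟩).val - p :=
      congrArg Fin.val h
    have h2 := hright a
    have h3 := hright b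
    have := congrArg Fin.val (π.injective (Fin.ext (by omega :
      (π ⟨p + 1 + a, by omega⟩).val = (π ⟨p + 1 + b, by omega⟩).val)))
    ext
    simp at this
    omega
  refine ⟨Equiv.ofBijective f (Finite.injective_iff_bijective.mp hf),
    Equiv.ofBijective g (Finite.injective_iff_bijective.mp hg), ?_⟩
  ext m
  rcases position_cases m with ⟨i, rfl⟩ | rfl | ⟨i, rfl⟩
  · rw [glue_left]
    rfl
  · rw [glue_mid, hp]
    rfl
  · rw [glue_right]
    have := hright i
    simp only [Equiv.ofBijective_apply, g]
    omega

/-- Permutations with maximum at position `p`, restricted by a condition `Q` that only depends on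
the part `L` before the maximum, are counted by a product. -/
lemma card_fiber {p r : ℕ} (P : Equiv.Perm (Fin p) → Prop)
    (Q : Equiv.Perm (Fin (p + r + 1)) → Prop) (hPQ : ∀ L R, Q (glue L R) ↔ P L) :
    Nat.card {π : Equiv.Perm (Fin (p + r + 1)) //
      Avoids231 π ∧ π ⟨p, by omega⟩ = Fin.last (p + r) ∧ Q π} =
    Nat.card {L : Equiv.Perm (Fin p) // Avoids231 L ∧ P L} *
      Nat.card {R : Equiv.Perm (Fin r) // Avoids231 R} := by
  rw [← Nat.card_prod]
  symm
  refine Nat.card_congr (Equiv.ofBijective (fun x => ⟨glue x.1.1 x.2.1,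
    (glue_avoids _ _).2 ⟨x.1.2.1, x.2.2⟩, Fin.ext (glue_mid _ _), (hPQ _ _).2 x.1.2.2⟩) ⟨?_, ?_⟩)
  · rintro ⟨⟨L, hL⟩, ⟨R, hR⟩⟩ ⟨⟨L', hL'⟩, ⟨R', hR'⟩⟩ h
    obtain ⟨rfl, rfl⟩ := glue_injective (congrArg Subtype.val h)
    rfl
  · rintro ⟨π, hav, hp, hQ⟩
    obtain ⟨L, R, rfl⟩ := exists_glue π hav hp
    have h := (glue_avoids _ _).1 hav
    exact ⟨⟨⟨L, h.1, (hPQ _ _).1 hQ⟩, ⟨R, h.2⟩⟩, rfl⟩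

/-- Classifying permutations of size `n + 1` by the position of the maximum. -/
lemma card_sum_fiber {n : ℕ} (Q : Equiv.Perm (Fin (n + 1)) → Prop) :
    Nat.card {π : Equiv.Perm (Fin (n + 1)) // Q π} =
      ∑ p : Fin (n + 1), Nat.card {π : Equiv.Perm (Fin (n + 1)) // Q π ∧ π p = Fin.last n} := by
  classical
  simp only [Nat.card_eq_fintype_card, Fintype.card_subtype]
  rw [Finset.card_eq_sum_card_fiberwise (f := fun π => π.symm (Fin.last n))
    (t := Finset.univ) (fun _ _ => Finset.mem_coe.2 (Finset.mem_univ _))]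
  refine Finset.sum_congr rfl fun p _ => ?_
  congr 1
  ext π
  simp only [Finset.mem_filter, Finset.mem_univ, true_and, Equiv.symm_apply_eq]
  rw [eq_comm (a := Fin.last n)]

/-! ### Counting -/

theorem card_avoids (n : ℕ) :
    Nat.card {π : Equiv.Perm (Fin n) // Avoids231 π} = catalan n := by
  induction n using Nat.strong_induction_on with
  | _ n ih =>
    cases n with
    | zero =>
      rw [catalan_zero, Nat.card_eq_one_iff_unique]
      exact ⟨⟨fun a b => Subtype.ext (Subsingleton.elim _ _)⟩,
        ⟨⟨1, fun ⟨i, _⟩ => i.elim0⟩⟩⟩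
    | succ n =>
      rw [card_sum_fiber, catalan_succ]
      refine Finset.sum_congr rfl fun ⟨p, hp⟩ _ => ?_
      obtain ⟨r, rfl⟩ : ∃ r, n = p + r := ⟨n - p, by omega⟩
      have h := card_fiber (p := p) (r := r) (fun _ => True) (fun _ => True) (by simp)
      simp only [and_true] at h
      rw [h, ih p hp, ih r (by omega)]
      simp

/-- The number of 231-avoiding permutations of size `p` without left-to-right maxima at
(0-indexed) positions `≥ k`. -/
noncomputable def lateFree (p k : ℕ) : ℕ :=
  Nat.card {L : Equiv.Perm (Fin p) // Avoids231 L ∧ ∀ m : Fin p, k ≤ m.val → ¬ IsLRMax L m}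

lemma lateFree_self (k : ℕ) : lateFree k k = catalan k := by
  rw [← card_avoids, lateFree]
  refine Nat.card_congr (Equiv.subtypeEquivRight fun L => ?_)
  simp only [and_iff_left_iff_imp]
  intro _ m hm
  omega

lemma lateFree_zero (p : ℕ) (hp : 0 < p) : lateFree p 0 = 0 := by
  rw [lateFree, Nat.card_eq_zero]
  left
  refine ⟨fun ⟨L, _, h⟩ => h ⟨0, hp⟩ (Nat.zero_le _) ?_⟩
  intro l hl
  simp [Fin.lt_def] at hl

/-- The last left-to-right maximum is the maximum. -/
lemma isLastLRMax_iff {n : ℕ} (π : Equiv.Perm (Fin (n + 1))) (i : Fin (n + 1)) :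
    IsLRMax π i ∧ (∀ m, i < m → ¬ IsLRMax π m) ↔ π i = Fin.last n := by
  constructor
  · rintro ⟨h1, h2⟩
    have hmax : IsLRMax π (π.symm (Fin.last n)) := by
      intro l hl
      rw [Equiv.apply_symm_apply]
      refine lt_of_le_of_ne (Fin.le_last _) fun h => hl.ne ?_
      rw [← h, Equiv.symm_apply_apply]
    rcases lt_trichotomy (π.symm (Fin.last n)) i with h | h | h
    · have := h1 _ h
      rw [Equiv.apply_symm_apply] at this
      exact absurd this (Fin.le_last _).not_gt
    · rw [← h, Equiv.apply_symm_apply]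
    · exact absurd hmax (h2 _ h)
  · intro h
    refine ⟨fun l hl => ?_, fun m hm hlr => ?_⟩
    · rw [h]
      exact lt_of_le_of_ne (Fin.le_last _) fun h' => hl.ne (π.injective (h'.trans h.symm))
    · exact absurd (hlr i hm) (by rw [h]; exact (Fin.le_last _).not_gt)

lemma lateFree_succ (k r : ℕ) :
    lateFree (k + r + 1) (k + 1) = lateFree (k + r + 1) k + catalan k * catalan r := by
  classical
  have h := card_fiber (p := k) (r := r) (fun _ => True) (fun _ => True) (by simp)
  simp only [and_true] at h
  rw [card_avoids, card_avoids] at h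
  rw [← h, lateFree, lateFree]
  simp only [Nat.card_eq_fintype_card, Fintype.card_subtype]
  rw [← Finset.card_union_of_disjoint]
  · congr 1
    ext π
    simp only [Finset.mem_filter, Finset.mem_univ, true_and, Finset.mem_union,
      ← isLastLRMax_iff, ← and_or_left]
    refine and_congr_right fun _ => ⟨fun hs => ?_, ?_⟩
    · by_cases hlr : IsLRMax π ⟨k, by omega⟩
      · exact Or.inr ⟨hlr, fun m hm => hs m hm⟩
      · left
        intro m hm
        rcases hm.eq_or_lt with he | hl
        · have : m = ⟨k, by omega⟩ := Fin.ext he.symm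
          rwa [this]
        · exact hs m hl
    · rintro (h' | h') m hm
      · exact h' m (by omega)
      · exact h'.2 m hm
  · rw [Finset.disjoint_filter]
    rintro π _ ⟨_, h1⟩ ⟨_, h2⟩
    exact h1 _ le_rfl ((isLastLRMax_iff π _).2 h2).1

lemma glue_isLRMax {p r : ℕ} (L : Equiv.Perm (Fin p)) (R : Equiv.Perm (Fin r)) (m : Fin p) :
    IsLRMax (glue L R) ⟨m, by omega⟩ ↔ IsLRMax L m := by
  constructor
  · intro h l hl
    have := h ⟨l, by omega⟩ hl
    rwa [Fin.lt_def, glue_left, glue_left] at this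
  · intro h l hl
    have hl' : l.val < m.val := hl
    have := h ⟨l, by omega⟩ hl
    rw [Fin.lt_def, glue_left]
    rw [Fin.lt_def, ← glue_left L R] at this
    exact this

lemma card_posWin (n k : ℕ) :
    Nat.card {π : Equiv.Perm (Fin (n + 1)) // Avoids231 π ∧ PosWin (Nat.succ_pos n) k π} =
      ∑ p ∈ Finset.Ico k (n + 1), lateFree p k * catalan (n - p) := by
  have hterm : ∀ p : Fin (n + 1),
      Nat.card {π : Equiv.Perm (Fin (n + 1)) //
        (Avoids231 π ∧ PosWin (Nat.succ_pos n) k π) ∧ π p = Fin.last n} =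
      if k ≤ p.val then lateFree p k * catalan (n - p) else 0 := by
    rintro ⟨p, hp⟩
    obtain ⟨r, rfl⟩ : ∃ r, n = p + r := ⟨n - p, by omega⟩
    have hpos : ∀ π : Equiv.Perm (Fin (p + r + 1)), π ⟨p, hp⟩ = Fin.last (p + r) →
        (PosWin (Nat.succ_pos (p + r)) k π ↔
          k ≤ p ∧ ∀ m : Fin (p + r + 1), k ≤ m.val → m.val < p → ¬ IsLRMax π m) := by
      intro π h
      have : π.symm ⟨p + r + 1 - 1, by omega⟩ = ⟨p, hp⟩ := by
        rw [Equiv.symm_apply_eq, h]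
        rfl
      simp only [PosWin, this]
    split_ifs with hkp
    · have h := card_fiber (p := p) (r := r) (fun L => ∀ m : Fin p, k ≤ m.val → ¬ IsLRMax L m)
        (fun π => ∀ m : Fin (p + r + 1), k ≤ m.val → m.val < p → ¬ IsLRMax π m) (by
          intro L R
          constructor
          · intro h m hm hlr
            exact h ⟨m, by omega⟩ hm m.2 ((glue_isLRMax L R m).2 hlr)
          · intro h m hm hmp hlr
            exact h ⟨m, hmp⟩ hm ((glue_isLRMax L R ⟨m, hmp⟩).1 hlr))
      rw [card_avoids] at h
      simp only [Nat.add_sub_cancel_left]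
      rw [lateFree, ← h]
      refine Nat.card_congr (Equiv.subtypeEquivRight fun π => ?_)
      constructor
      · rintro ⟨⟨h1, h2⟩, h3⟩
        exact ⟨h1, h3, ((hpos π h3).1 h2).2⟩
      · rintro ⟨h1, h3, h2⟩
        exact ⟨⟨h1, (hpos π h3).2 ⟨hkp, h2⟩⟩, h3⟩
    · rw [Nat.card_eq_zero]
      left
      exact ⟨fun ⟨π, ⟨_, h2⟩, h3⟩ => hkp ((hpos π h3).1 h2).1⟩
  rw [card_sum_fiber, Finset.sum_congr rfl fun p _ => hterm p,
    Fin.sum_univ_eq_sum_range (fun p => if k ≤ p then lateFree p k * catalan (n - p) else 0),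
    ← Finset.sum_filter]
  congr 1
  ext p
  simp
  omega

/-- The sum does not depend on the cutoff; the terms gained and lost when passing from `k` to
`k + 1` both total `catalan k * catalan (n - k)`. -/
lemma sum_lateFree (n k : ℕ) (hk : k ≤ n) :
    ∑ p ∈ Finset.Ico k (n + 1), lateFree p k * catalan (n - p) = catalan n := by
  induction k with
  | zero =>
    rw [Finset.sum_eq_single_of_mem 0 (by simp), lateFree_self]
    · simp
    · intro p _ hp
      rw [lateFree_zero p (Nat.pos_of_ne_zero hp), zero_mul]
  | succ k ih =>
    rw [← ih (by omega), Finset.sum_eq_sum_Ico_succ_bot (by omega : k < n + 1), lateFree_self]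
    obtain ⟨s, rfl⟩ : ∃ s, n = k + 1 + s := ⟨n - (k + 1), by omega⟩
    have hconv : catalan (k + 1 + s - k) =
        ∑ i ∈ Finset.range (s + 1), catalan i * catalan (s - i) := by
      rw [show k + 1 + s - k = s + 1 by omega, catalan_succ,
        Fin.sum_univ_eq_sum_range (fun i => catalan i * catalan (s - i))]
    rw [hconv, Finset.sum_Ico_eq_sum_range, Finset.sum_Ico_eq_sum_range,
      show k + 1 + s + 1 - (k + 1) = s + 1 by omega, Finset.mul_sum, ← Finset.sum_add_distrib]
    refine Finset.sum_congr rfl fun i _ => ?_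
    rw [show k + 1 + s - (k + 1 + i) = s - i by omega, show k + 1 + i = k + i + 1 by omega,
      lateFree_succ]
    ring

/-- every positional strategy wins exactly `C_{N-1}` of the `C_N`
231-avoiding interview orders. -/
theorem stmt2 {N : ℕ} (hN : 1 ≤ N) (k : ℕ) (hk : k ≤ N - 1) :
    Nat.card {π : Equiv.Perm (Fin N) // Avoids231 ⇑π ∧ PosWin (by omega) k π} =
      catalan (N - 1) := by
  obtain ⟨n, rfl⟩ : ∃ n, N = n + 1 := ⟨N - 1, by omega⟩
  exact (card_posWin n k).trans (sum_lateFree n k hk)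
end

section
/- For every N ≥ 1, the maximum over all strategies s of the number of 231-avoiding permutations of size N won by s equals the Catalan number C_{N−1}. Consequently the optimal probability of success for the 231-avoiding game is C_{N−1}/C_N, and this ratio tends to 1/4 as N → ∞. -/
/-! ### Counting 231-avoiding words -/

/-- A word avoids 231 if none of its three-letter subwords has the relative order 2, 3, 1. -/
def ListAvoids (l : List ℕ) : Prop :=
  ∀ x y z, List.Sublist [x, y, z] l → ¬ (z < x ∧ x < y)

/-- The 231-avoiding arrangement of `a, a + 1, …` encoded by a binary tree: the root is the
maximum, the left subtree encodes the smaller letters, which precede it, and the right subtree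
encodes the remaining letters, which follow it. -/
def treeWord : BinaryTree Unit → ℕ → List ℕ
  | .nil, _ => []
  | .node _ l r, a =>
      treeWord l a ++ (a + l.numNodes + r.numNodes) :: treeWord r (a + l.numNodes)

theorem treeWord_perm (t : BinaryTree Unit) (a : ℕ) :
    (treeWord t a).Perm (List.range' a t.numNodes) := by
  induction t generalizing a with
  | nil => simp [treeWord, BinaryTree.numNodes]
  | node u l r ihl ihr =>
    have h1 := ihl a
    have h2 := ihr (a + l.numNodes)
    simp only [treeWord, BinaryTree.numNodes]
    rw [List.range'_1_concat, ← List.range'_append_1, List.append_assoc, ← add_assoc]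
    refine h1.append ?_
    exact (h2.cons _).trans (List.perm_append_singleton _ _).symm

theorem mem_treeWord {t : BinaryTree Unit} {a x : ℕ} :
    x ∈ treeWord t a ↔ a ≤ x ∧ x < a + t.numNodes := by
  rw [(treeWord_perm t a).mem_iff, List.mem_range'_1]

theorem treeWord_length (t : BinaryTree Unit) (a : ℕ) :
    (treeWord t a).length = t.numNodes := by
  simpa using (treeWord_perm t a).length_eq

theorem treeWord_injective (t t' : BinaryTree Unit) (a : ℕ)
    (h : treeWord t a = treeWord t' a) : t = t' := by
  induction t generalizing a t' with
  | nil =>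
    cases t' with
    | nil => rfl
    | node u l r => simp [treeWord] at h
  | node u l r ihl ihr =>
    cases t' with
    | nil => simp [treeWord] at h
    | node u' l' r' =>
      have hlen : (BinaryTree.node u l r).numNodes = (BinaryTree.node u' l' r').numNodes := by
        rw [← treeWord_length _ a, h, treeWord_length]
      simp only [BinaryTree.numNodes] at hlen
      simp only [treeWord] at h
      have h1 : a + l'.numNodes + r'.numNodes ∉ treeWord l a := by
        rw [mem_treeWord]; omega
      have h2 : a + l'.numNodes + r'.numNodes ∉ treeWord r (a + l.numNodes) := by
        rw [mem_treeWord]; omega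
      obtain ⟨e1, -, e2⟩ := (List.append_cons_inj_of_notMem h1 h2).1 h
      have e := ihl l' a e1
      subst e
      rw [ihr r' _ e2]

theorem ListAvoids.append_cons {l₁ l₂ : List ℕ} {m : ℕ} (h₁ : ListAvoids l₁)
    (h₂ : ListAvoids l₂) (hm : ∀ y ∈ l₂, y < m) (hlt : ∀ x ∈ l₁, ∀ y ∈ m :: l₂, x < y) :
    ListAvoids (l₁ ++ m :: l₂) := by
  rintro x y z hs ⟨hzx, hxy⟩
  obtain ⟨s, t, e, hs1, ht⟩ := List.sublist_append_iff.1 hs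
  match s, e with
  | [], e =>
    obtain rfl : [x, y, z] = t := by simpa using e
    rcases List.sublist_cons_iff.1 ht with h | ⟨r, e, h⟩
    · exact h₂ x y z h ⟨hzx, hxy⟩
    · simp only [List.cons.injEq] at e
      obtain ⟨rfl, rfl⟩ := e
      exact absurd (hm y (h.subset (by simp))) (by omega)
  | x' :: s', e =>
    simp only [List.cons_append, List.cons.injEq] at e
    obtain ⟨rfl, e⟩ := e
    have hx : x ∈ l₁ := hs1.subset (by simp)
    by_cases hz : z ∈ t
    · exact absurd (hlt x hx z (ht.subset hz)) (by omega)
    · have ht0 : t = [] := by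
        rcases List.eq_nil_or_concat t with h | ⟨t', w, rfl⟩
        · exact h
        · exfalso
          apply hz
          have h3 := congrArg List.getLast? e
          simp at h3
          simp [h3]
      subst ht0
      rw [List.append_nil] at e
      subst e
      exact h₁ x y z hs1 ⟨hzx, hxy⟩

theorem treeWord_avoids (t : BinaryTree Unit) (a : ℕ) : ListAvoids (treeWord t a) := by
  induction t generalizing a with
  | nil => intro x y z h; simp [treeWord] at h
  | node u l r ihl ihr =>
    refine (ihl a).append_cons (ihr _) ?_ ?_
    · intro y hy
      rw [mem_treeWord] at hy
      omega
    · intro x hx y hy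
      rw [List.mem_cons, mem_treeWord] at hy
      rw [mem_treeWord] at hx
      omega

/-- If a rearrangement of an interval is a concatenation of two words, the letters of the first
being smaller than those of the second, then both words are rearrangements of intervals. -/
theorem perm_range'_split {l₁ l₂ : List ℕ} {a n : ℕ} (h : (l₁ ++ l₂).Perm (List.range' a n))
    (hlt : ∀ x ∈ l₁, ∀ y ∈ l₂, x < y) :
    l₁.Perm (List.range' a l₁.length) ∧ l₂.Perm (List.range' (a + l₁.length) l₂.length) := by
  have p1 := List.mergeSort_perm l₁ (· ≤ ·)
  have p2 := List.mergeSort_perm l₂ (· ≤ ·)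
  have hs : ((l₁.mergeSort (· ≤ ·)) ++ (l₂.mergeSort (· ≤ ·))).Pairwise (· ≤ ·) := by
    refine List.pairwise_append.2 ⟨List.pairwise_mergeSort' _ _, List.pairwise_mergeSort' _ _, ?_⟩
    intro x hx y hy
    exact (hlt x (p1.mem_iff.1 hx) y (p2.mem_iff.1 hy)).le
  have hlen : n = l₁.length + l₂.length := by simpa using h.length_eq.symm
  have he : (l₁.mergeSort (· ≤ ·)) ++ (l₂.mergeSort (· ≤ ·)) =
      List.range' a l₁.length ++ List.range' (a + l₁.length) l₂.length := by
    rw [List.range'_append_1, ← hlen]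
    refine ((p1.append p2).trans h).eq_of_pairwise' hs ?_
    exact List.pairwise_le_range'
  obtain ⟨e1, e2⟩ := List.append_inj he (by simp)
  exact ⟨e1 ▸ p1.symm, e2 ▸ p2.symm⟩

/-- Every 231-avoiding arrangement of an interval comes from a binary tree: the letters before the
maximum are smaller than those after it, and both parts are handled recursively. -/
theorem exists_treeWord (n : ℕ) : ∀ (a : ℕ) (l : List ℕ), l.Perm (List.range' a n) →
    ListAvoids l → ∃ t : BinaryTree Unit, t.numNodes = n ∧ treeWord t a = l := by
  induction n using Nat.strong_induction_on with
  | _ n ih =>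
    intro a l hp ha
    cases n with
    | zero =>
      obtain rfl : l = [] := by simpa using hp
      exact ⟨.nil, rfl, rfl⟩
    | succ n =>
      have hmem : a + n ∈ l := by
        rw [hp.mem_iff, List.mem_range'_1]; omega
      obtain ⟨l₁, l₂, rfl⟩ := List.append_of_mem hmem
      have hp' : (l₁ ++ l₂).Perm (List.range' a n) := by
        rw [List.range'_1_concat] at hp
        exact (List.perm_middle.symm.trans
          (hp.trans (List.perm_append_singleton _ _))).cons_inv
      have hnd : (l₁ ++ l₂).Nodup := hp'.nodup_iff.2 List.nodup_range'
      have hlt : ∀ x ∈ l₁, ∀ y ∈ l₂, x < y := by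
        intro x hx y hy
        have hne : x ≠ y := fun e => (List.nodup_append.1 hnd).2.2 x hx y hy e
        have hxn : x < a + n := by
          have := hp'.mem_iff.1 (List.mem_append_left l₂ hx)
          rw [List.mem_range'_1] at this
          omega
        have hsub : List.Sublist [x, a + n, y] (l₁ ++ (a + n) :: l₂) :=
          (List.singleton_sublist.2 hx).append
            ((List.singleton_sublist.2 hy).cons_cons (a + n))
        have := ha x (a + n) y hsub
        omega
      have hlen : l₁.length + l₂.length = n := by simpa using hp'.length_eq
      obtain ⟨q1, q2⟩ := perm_range'_split hp' hlt
      have a1 : ListAvoids l₁ := fun x y z h =>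
        ha x y z (h.trans (List.sublist_append_left _ _))
      have a2 : ListAvoids l₂ := fun x y z h =>
        ha x y z (h.trans ((List.sublist_cons_self _ _).trans (List.sublist_append_right _ _)))
      obtain ⟨t1, c1, e1⟩ := ih l₁.length (by omega) a l₁ q1 a1
      obtain ⟨t2, c2, e2⟩ := ih l₂.length (by omega) _ l₂ q2 a2
      refine ⟨.node () t1 t2, by simp only [BinaryTree.numNodes]; omega, ?_⟩
      simp only [treeWord, e1, c1, e2, c2, ← hlen, add_assoc]

/-- The finite set of 231-avoiding arrangements of `0, …, n - 1`, in the form of words. -/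
def avoiders (n : ℕ) : Finset (List ℕ) :=
  (BinaryTree.treesOfNumNodesEq n).image (fun t => treeWord t 0)

theorem card_avoiders (n : ℕ) : (avoiders n).card = catalan n := by
  rw [avoiders, Finset.card_image_of_injective _ (fun t t' h => treeWord_injective t t' 0 h),
    BinaryTree.treesOfNumNodesEq_card_eq_catalan]

theorem mem_avoiders {n : ℕ} {l : List ℕ} :
    l ∈ avoiders n ↔ l.Nodup ∧ (∀ x ∈ l, x < n) ∧ l.length = n ∧ ListAvoids l := by
  simp only [avoiders, Finset.mem_image, BinaryTree.mem_treesOfNumNodesEq]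
  constructor
  · rintro ⟨t, rfl, rfl⟩
    refine ⟨(treeWord_perm t 0).nodup_iff.2 List.nodup_range', ?_, treeWord_length t 0,
      treeWord_avoids t 0⟩
    intro x hx
    simpa using (mem_treeWord.1 hx).2
  · rintro ⟨hnd, hlt, hlen, hav⟩
    refine exists_treeWord n 0 l ?_ hav
    refine (hnd.subperm ?_).perm_of_length_le (by simp [hlen])
    intro x hx
    simpa [List.mem_range'_1] using hlt x hx

theorem listAvoids_ofFn {n : ℕ} (f : Fin n → ℕ) :
    ListAvoids (List.ofFn f) ↔ ∀ i j k, i < j → j < k → ¬ (f k < f i ∧ f i < f j) := by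
  constructor
  · intro h i j k hij hjk
    refine h (f i) (f j) (f k) ?_
    have hmono : StrictMono ![i, j, k] := by
      rw [Fin.strictMono_iff_lt_succ]
      intro a
      fin_cases a <;> simpa
    refine List.sublist_iff_exists_fin_orderEmbedding_get_eq.2
      ⟨OrderEmbedding.ofStrictMono (fun a => Fin.cast (by simp) (![i, j, k] a))
        (fun a b hab => hmono hab), ?_⟩
    intro a
    change Fin 3 at a
    fin_cases a <;> simp
  · intro h x y z hs
    obtain ⟨g, hg⟩ := List.sublist_iff_exists_fin_orderEmbedding_get_eq.1 hs
    have h0 := hg ⟨0, by simp⟩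
    have h1 := hg ⟨1, by simp⟩
    have h2 := hg ⟨2, by simp⟩
    simp only [List.get_ofFn] at h0 h1 h2
    have := h (Fin.cast (by simp) (g ⟨0, by simp⟩)) (Fin.cast (by simp) (g ⟨1, by simp⟩))
      (Fin.cast (by simp) (g ⟨2, by simp⟩)) (by simp) (by simp)
    rw [← h0, ← h1, ← h2] at this
    exact this

theorem exists_perm_ofFn {N : ℕ} {l : List ℕ} (hnd : l.Nodup) (hlt : ∀ x ∈ l, x < N)
    (hlen : l.length = N) :
    ∃ π : Equiv.Perm (Fin N), List.ofFn (fun i => (π i : ℕ)) = l := by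
  subst hlen
  let f : Fin l.length → Fin l.length := fun i => ⟨l.get i, hlt _ (List.get_mem _ _)⟩
  have hf : Function.Injective f := by
    intro i j hij
    exact List.nodup_iff_injective_get.1 hnd (by simpa [f] using hij)
  refine ⟨Equiv.ofBijective f (Finite.injective_iff_bijective.1 hf), ?_⟩
  simp [f]

/-! ### Deleting the maximum -/

/-- The word obtained from a permutation by deleting its maximum. -/
def deleteMax {n : ℕ} (π : Equiv.Perm (Fin (n + 1))) : List ℕ :=
  List.ofFn (fun a : Fin n => (π ((π.symm (Fin.last n)).succAbove a) : ℕ))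

theorem deleteMax_mem {n : ℕ} (π : Equiv.Perm (Fin (n + 1))) (h : Avoids231 ⇑π) :
    deleteMax π ∈ avoiders n := by
  refine mem_avoiders.2 ⟨?_, ?_, by simp [deleteMax], ?_⟩
  · rw [deleteMax, List.nodup_ofFn]
    intro a b hab
    exact Fin.succAbove_right_injective (π.injective (Fin.ext hab))
  · intro x hx
    rw [deleteMax, List.mem_ofFn] at hx
    obtain ⟨a, rfl⟩ := hx
    have : π ((π.symm (Fin.last n)).succAbove a) ≠ Fin.last n := by
      intro e
      exact Fin.succAbove_ne _ a ((Equiv.eq_symm_apply π).2 e)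
    exact Fin.val_lt_last this
  · rw [deleteMax, listAvoids_ofFn]
    intro i j k hij hjk hh
    exact h ⟨_, _, _, Fin.succAbove_lt_succAbove_iff.2 hij, Fin.succAbove_lt_succAbove_iff.2 hjk,
      hh.1, hh.2⟩

/-- A win means that the stopping index is one more than the (0-indexed) position of the
maximum. -/
theorem Wins.stopsAt {n : ℕ} {s : Strategy} {π : Equiv.Perm (Fin (n + 1))} (h : Wins s ⇑π) :
    StopsAt s ⇑π ((π.symm (Fin.last n) : ℕ) + 1) := by
  obtain ⟨i, hs, h1, h2, e⟩ := h
  have e' : π.symm (Fin.last n) = ⟨i - 1, h1⟩ := by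
    rw [Equiv.symm_apply_eq, e]; rfl
  have hi := hs.1
  rw [e']
  simpa [Nat.sub_add_cancel hi] using hs

theorem flatten_congr {N k : ℕ} {π τ : Fin N → Fin N} (h : k ≤ N)
    (he : PrefixEq π τ k h h) : flatten π h = flatten τ h := by
  funext a
  apply Fin.ext
  simp only [flatten]
  congr 1
  ext b
  simp [he b a]

/-- Two permutations that agree after deletion of the maximum cannot both be won if the maximum
comes earlier in the first one: up to that position, the two interviews look the same. -/
theorem no_win_of_lt {n : ℕ} {s : Strategy} {π τ : Equiv.Perm (Fin (n + 1))}
    (hπ : Avoids231 ⇑π) (wπ : Wins s ⇑π) (wτ : Wins s ⇑τ) (hd : deleteMax π = deleteMax τ)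
    (hlt : π.symm (Fin.last n) < τ.symm (Fin.last n)) : False := by
  set p := π.symm (Fin.last n) with hp
  set q := τ.symm (Fin.last n) with hq
  have hπp : π p = Fin.last n := by simp [hp]
  have key : ∀ a : Fin n, π (p.succAbove a) = τ (q.succAbove a) := by
    intro a
    exact Fin.ext (congrFun (List.ofFn_injective hd) a)
  have stopπ : StopsAt s ⇑π ((p : ℕ) + 1) := wπ.stopsAt
  have stopτ : StopsAt s ⇑τ ((q : ℕ) + 1) := wτ.stopsAt
  obtain ⟨-, hp1, hsp, -⟩ := stopπ
  obtain ⟨-, -, -, hfalse⟩ := stopτ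
  have hpq : (p : ℕ) < q := hlt
  have hqn : (q : ℕ) < n + 1 := q.2
  -- Before position `p` the two permutations agree.
  have hbefore : ∀ b : Fin (n + 1), b < p → π b = τ b := by
    intro b hb
    have hb' : (b : ℕ) < p := hb
    have := key ⟨b, by omega⟩
    rwa [Fin.succAbove_of_castSucc_lt _ _ hb,
      Fin.succAbove_of_castSucc_lt _ _ (hb'.trans hpq)] at this
  -- The entry of `τ` at position `p` is the entry of `π` right after its maximum.
  have hat : π ⟨p + 1, by omega⟩ = τ p := by
    have := key ⟨p, by omega⟩
    rwa [Fin.succAbove_of_le_castSucc _ _ (by simp),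
      Fin.succAbove_of_castSucc_lt _ _ (by rw [Fin.lt_def]; simpa using hpq)] at this
  have hmaxπ : ∀ b : Fin (n + 1), b < p → π b < π p := by
    intro b hb
    rw [hπp]
    refine lt_of_le_of_ne (Fin.le_last _) ?_
    rw [← hπp]
    exact fun e => hb.ne (π.injective e)
  have hmaxτ : ∀ b : Fin (n + 1), b < p → τ b < τ p := by
    intro b hb
    rw [← hbefore b hb]
    rw [← hat]
    have hb' : (b : ℕ) < p := hb
    refine lt_of_le_of_ne (not_lt.1 fun hc => hπ ⟨b, p, ⟨p + 1, by omega⟩, hb, ?_, hc,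
      hmaxπ b hb⟩) ?_
    · simp [Fin.lt_def]
    · intro e
      have := congrArg Fin.val (π.injective e)
      simp at this
      omega
  have hpre : PrefixEq ⇑π ⇑τ ((p : ℕ) + 1) hp1 hp1 := by
    intro a b
    have ha : Fin.castLE hp1 a < p ∨ Fin.castLE hp1 a = p := by
      rw [← le_iff_lt_or_eq, Fin.le_def]; simp; omega
    have hb : Fin.castLE hp1 b < p ∨ Fin.castLE hp1 b = p := by
      rw [← le_iff_lt_or_eq, Fin.le_def]; simp; omega
    rcases ha with ha | ha <;> rcases hb with hb | hb
    · rw [hbefore _ ha, hbefore _ hb]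
    · rw [hb]
      exact ⟨fun _ => hmaxτ _ ha, fun _ => hmaxπ _ ha⟩
    · rw [ha]
      exact ⟨fun h => absurd h (hmaxπ _ hb).not_gt, fun h => absurd h (hmaxτ _ hb).not_gt⟩
    · rw [ha, hb]; simp
  have hf := hfalse ((p : ℕ) + 1) (by omega) (by omega) hp1
  rw [← flatten_congr hp1 hpre] at hf
  rcases hsp with h | h
  · rw [h] at hf; exact Bool.noConfusion hf
  · omega

theorem deleteMax_injOn {n : ℕ} {s : Strategy} {π τ : Equiv.Perm (Fin (n + 1))}
    (hπ : Avoids231 ⇑π) (hτ : Avoids231 ⇑τ) (wπ : Wins s ⇑π) (wτ : Wins s ⇑τ)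
    (hd : deleteMax π = deleteMax τ) : π = τ := by
  rcases lt_trichotomy (π.symm (Fin.last n)) (τ.symm (Fin.last n)) with h | h | h
  · exact (no_win_of_lt hπ wπ wτ hd h).elim
  · have key : ∀ a : Fin n, π ((π.symm (Fin.last n)).succAbove a) =
        τ ((τ.symm (Fin.last n)).succAbove a) := by
      intro a
      exact Fin.ext (congrFun (List.ofFn_injective hd) a)
    ext1 x
    rcases Fin.eq_self_or_eq_succAbove (π.symm (Fin.last n)) x with e | ⟨a, e⟩
    · conv_rhs => rw [e, h]
      rw [e]; simp
    · conv_rhs => rw [e, h]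
      rw [e, key]
  · exact (no_win_of_lt hτ wτ wπ hd.symm h).elim

theorem card_wins_le (n : ℕ) (s : Strategy) :
    Nat.card {π : Equiv.Perm (Fin (n + 1)) // Avoids231 ⇑π ∧ Wins s ⇑π} ≤ catalan n := by
  rw [← card_avoiders, ← Fintype.card_coe, ← Nat.card_eq_fintype_card]
  refine Nat.card_le_card_of_injective
    (fun π => (⟨deleteMax π.1, deleteMax_mem π.1 π.2.1⟩ : avoiders n)) ?_
  intro π τ h
  exact Subtype.ext (deleteMax_injOn π.2.1 τ.2.1 π.2.2 τ.2.2 (congrArg Subtype.val h))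

/-- Accepting the first candidate wins all permutations `n :: l` with `l` a 231-avoider of
size `n`. -/
theorem le_card_wins (n : ℕ) :
    catalan n ≤ Nat.card {π : Equiv.Perm (Fin (n + 1)) //
      Avoids231 ⇑π ∧ Wins (fun _ _ => true) ⇑π} := by
  have hex : ∀ l : avoiders n, ∃ π : Equiv.Perm (Fin (n + 1)),
      (Avoids231 ⇑π ∧ Wins (fun _ _ => true) ⇑π) ∧
        List.ofFn (fun i => (π i : ℕ)) = n :: l.1 := by
    rintro ⟨l, hl⟩
    obtain ⟨hnd, hlt, hlen, hav⟩ := mem_avoiders.1 hl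
    obtain ⟨π, hπ⟩ := exists_perm_ofFn (N := n + 1) (l := n :: l)
      (List.nodup_cons.2 ⟨fun h => lt_irrefl _ (hlt n h), hnd⟩)
      (by
        intro x hx
        rcases List.mem_cons.1 hx with rfl | hx
        · omega
        · exact (hlt x hx).trans (Nat.lt_succ_self n))
      (by simp [hlen])
    refine ⟨π, ⟨?_, ?_⟩, hπ⟩
    · have h : ListAvoids ([] ++ n :: l) :=
        ListAvoids.append_cons (fun x y z h => by simp at h) hav hlt (by simp)
      rw [List.nil_append, ← hπ, listAvoids_ofFn] at h
      rintro ⟨i, j, k, hij, hjk, h1, h2⟩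
      exact h i j k hij hjk ⟨h1, h2⟩
    · refine ⟨1, ⟨le_rfl, by omega, Or.inl rfl, fun j h1 h2 => by omega⟩, by omega, by omega, ?_⟩
      rw [List.ofFn_succ, List.cons.injEq] at hπ
      exact Fin.ext hπ.1
  choose f hf1 hf2 using hex
  rw [← card_avoiders, ← Fintype.card_coe, ← Nat.card_eq_fintype_card]
  refine Nat.card_le_card_of_injective (fun l => ⟨f l, hf1 l⟩) ?_
  intro l l' h
  have h' : f l = f l' := congrArg Subtype.val h
  have := (hf2 l).symm.trans ((by rw [h']) : _ = _) |>.trans (hf2 l')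
  exact Subtype.ext (List.cons.inj this).2

/-! ### The limit -/

theorem catalan_ratio (n : ℕ) :
    (catalan n : ℝ) / (catalan (n + 1) : ℝ) = (n + 2) / (2 * (2 * n + 1)) := by
  have h1 := succ_mul_catalan_eq_centralBinom n
  have h2 := succ_mul_catalan_eq_centralBinom (n + 1)
  have h3 := Nat.succ_mul_centralBinom_succ n
  rw [← h1, ← h2] at h3
  have h4 : 0 < catalan (n + 1) := by
    have := Nat.centralBinom_pos (n + 1)
    rw [← h2] at this
    exact Nat.pos_of_mul_pos_left this
  have h5 : (catalan (n + 1) : ℝ) ≠ 0 := by exact_mod_cast h4.ne'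
  have h6 : ((n : ℝ) + 1) * (((n : ℝ) + 2) * catalan (n + 1)) =
      (n + 1) * (2 * (2 * n + 1) * catalan n) := by
    have := congrArg (Nat.cast (R := ℝ)) h3
    push_cast at this
    linarith
  have h7 := mul_left_cancel₀ (by positivity : (n : ℝ) + 1 ≠ 0) h6
  rw [div_eq_div_iff h5 (by positivity)]
  linarith

theorem tendsto_catalan_ratio :
    Filter.Tendsto (fun n : ℕ => (catalan n : ℝ) / (catalan (n + 1) : ℝ))
      Filter.atTop (nhds (1 / 4)) := by
  -- The ratio is `1/4 + (3/4) / (2n + 1)`.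
  have h : (fun n : ℕ => (catalan n : ℝ) / (catalan (n + 1) : ℝ)) =
      fun n : ℕ => 1 / 4 + (3 / 4) / (2 * (n : ℝ) + 1) := by
    funext n
    rw [catalan_ratio]
    field_simp
    ring
  rw [h]
  have h1 : Filter.Tendsto (fun n : ℕ => 2 * (n : ℝ) + 1) Filter.atTop Filter.atTop :=
    Filter.tendsto_atTop_add_const_right _ _
      (tendsto_natCast_atTop_atTop.const_mul_atTop (by norm_num))
  simpa using (h1.const_div_atTop (3 / 4 : ℝ)).const_add (1 / 4 : ℝ)

/-- for each `N ≥ 1` the maximum, over all strategies, of the number of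
231-avoiding permutations of size `N` won equals `C_{N-1}`; hence the optimal success
probability is `C_{N-1}/C_N`, which tends to `1/4`. -/
theorem stmt3 :
    (∀ N : ℕ, 1 ≤ N →
      IsGreatest {n : ℕ | ∃ s : Strategy,
          n = Nat.card {π : Equiv.Perm (Fin N) // Avoids231 ⇑π ∧ Wins s ⇑π}}
        (catalan (N - 1))) ∧
    Filter.Tendsto (fun N : ℕ => (catalan (N - 1) : ℝ) / (catalan N : ℝ))
      Filter.atTop (nhds (1 / 4)) := by
  refine ⟨?_, (Filter.tendsto_add_atTop_iff_nat 1).1 (by simpa using tendsto_catalan_ratio)⟩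
  intro N hN
  obtain ⟨n, rfl⟩ := Nat.exists_eq_succ_of_ne_zero (by omega : N ≠ 0)
  refine ⟨⟨fun _ _ => true, le_antisymm (le_card_wins n) (card_wins_le n _)⟩, ?_⟩
  rintro m ⟨s, rfl⟩
  exact card_wins_le n s
end

section
/- For every N ≥ 1 there is a bijection Υ from the set of 231-avoiding permutations of size N onto the set of 132-avoiding permutations of size N such that: (a) for every π, the position of the value N in Υ(π) equals the position of the value N in π; and (b) for all π, π′ and all 1 ≤ i ≤ N, the i-th prefix flattenings of π and π′ are equal if and only if the i-th prefix flattenings of Υ(π) and Υ(π′) are equal. (Hence the prefix trees of the 231-avoiding and 132-avoiding best-choice games are isomorphic.) -/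
/-! ### Codes and the two decoding rules -/

/-- The sequences used as codes: the first term is `0` and each step goes up by at most `1`. -/
def IsCode {N : ℕ} (j : Fin N → ℕ) : Prop :=
  (∀ i : Fin N, i.val = 0 → j i = 0) ∧
    ∀ i i' : Fin N, i'.val = i.val + 1 → j i' ≤ j i + 1

/-- The relative order of `π` is the one that the 231-rule reads off from `j`. -/
def Coded231 {N : ℕ} (π : Fin N → Fin N) (j : Fin N → ℕ) : Prop :=
  ∀ a b : Fin N, a < b → (π b < π a ↔ ∀ s, a < s → s ≤ b → j a < j s)

/-- The relative order of `τ` is the one that the 132-rule reads off from `j`. -/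
def Coded132 {N : ℕ} (τ : Fin N → Fin N) (j : Fin N → ℕ) : Prop :=
  ∀ a b : Fin N, a < b → (τ a < τ b ↔ ∀ s, a ≤ s → s < b → j b ≤ j s)

/-! ### Decoding: from codes to avoiders -/

/-- Every strict total order on `Fin N` is the order of the entries of some permutation: send
each element to its rank. -/
lemma exists_perm_of_order {N : ℕ} (r : Fin N → Fin N → Prop)
    (irr : ∀ a, ¬ r a a) (tr : ∀ a b c, r a b → r b c → r a c)
    (tot : ∀ a b, a ≠ b → r a b ∨ r b a) :
    ∃ p : Equiv.Perm (Fin N), ∀ a b, p a < p b ↔ r a b := by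
  classical
  let f : Fin N → Fin N := fun a => ⟨(Finset.univ.filter (fun c => r c a)).card, by
    have h : (Finset.univ.filter (fun c => r c a)).card < (Finset.univ : Finset (Fin N)).card := by
      apply Finset.card_lt_card
      rw [Finset.ssubset_univ_iff]
      intro h
      have := Finset.mem_univ a
      rw [← h] at this
      exact irr a (by simpa using this)
    simpa using h⟩
  have mono : ∀ a b, r a b → f a < f b := by
    intro a b hab
    change (Finset.univ.filter (fun c => r c a)).card < (Finset.univ.filter (fun c => r c b)).card
    apply Finset.card_lt_card
    rw [Finset.ssubset_iff_of_subset]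
    · exact ⟨a, by simpa using hab, by simpa using irr a⟩
    · intro c hc
      simp only [Finset.mem_filter, Finset.mem_univ, true_and] at hc ⊢
      exact tr _ _ _ hc hab
  have inj : Function.Injective f := by
    intro a b hab
    by_contra hne
    rcases tot a b hne with h | h
    · exact absurd (mono _ _ h) (by simp [hab])
    · exact absurd (mono _ _ h) (by simp [hab])
  refine ⟨Equiv.ofBijective f (Finite.injective_iff_bijective.mp inj), fun a b => ?_⟩
  simp only [Equiv.ofBijective_apply]
  refine ⟨fun h => ?_, mono a b⟩
  rcases eq_or_ne a b with rfl | hne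
  · exact absurd h (lt_irrefl _)
  · rcases tot a b hne with h' | h'
    · exact h'
    · exact absurd (mono _ _ h') h.asymm

/-- The 231-rule defines a strict total order for any sequence `j`, and its permutation avoids
231. -/
lemma exists_coded231 {N : ℕ} (j : Fin N → ℕ) :
    ∃ p : Equiv.Perm (Fin N), Avoids231 ⇑p ∧ Coded231 ⇑p j := by
  obtain ⟨p, hp⟩ := exists_perm_of_order
    (fun a b : Fin N => (a < b ∧ ∃ s, a < s ∧ s ≤ b ∧ j s ≤ j a) ∨
      (b < a ∧ ∀ s, b < s → s ≤ a → j b < j s))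
    (by intro a h; simp at h)
    (by
      rintro a b c (⟨hab, s, hs1, hs2, hs3⟩ | ⟨hab, h1⟩) (⟨hbc, t, ht1, ht2, ht3⟩ | ⟨hbc, h2⟩)
      · exact Or.inl ⟨hab.trans hbc, s, hs1, hs2.trans hbc.le, hs3⟩
      · rcases lt_trichotomy a c with hac | rfl | hac
        · refine Or.inl ⟨hac, ?_⟩
          by_cases hsc : s ≤ c
          · exact ⟨s, hs1, hsc, hs3⟩
          · exact ⟨c, hac, le_rfl, ((h2 s (not_le.mp hsc) hs2).trans_le hs3).le⟩
        · exact absurd (h2 s hs1 hs2) (not_lt.mpr hs3)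
        · exact Or.inr ⟨hac, fun s h h' => h2 s h (h'.trans hab.le)⟩
      · by_cases hta : t ≤ a
        · exact absurd (h1 t ht1 hta) (not_lt.mpr ht3)
        · rw [not_le] at hta
          exact Or.inl ⟨hta.trans_le ht2, t, hta, ht2, ht3.trans (h1 a hab le_rfl).le⟩
      · refine Or.inr ⟨hbc.trans hab, fun s h h' => ?_⟩
        by_cases hsb : s ≤ b
        · exact h2 s h hsb
        · exact (h2 b hbc le_rfl).trans (h1 s (not_le.mp hsb) h'))
    (by
      have key : ∀ a b : Fin N, a < b → (∃ s, a < s ∧ s ≤ b ∧ j s ≤ j a) ∨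
          (∀ s, a < s → s ≤ b → j a < j s) := by
        intro a b _
        by_contra! h
        obtain ⟨h1, s, hs1, hs2, hs3⟩ := h
        exact absurd (h1 s hs1 hs2) (not_lt.mpr hs3)
      intro a b hne
      rcases lt_or_gt_of_ne hne with h | h
      · rcases key a b h with h' | h'
        · exact Or.inl (Or.inl ⟨h, h'⟩)
        · exact Or.inr (Or.inr ⟨h, h'⟩)
      · rcases key b a h with h' | h'
        · exact Or.inr (Or.inl ⟨h, h'⟩)
        · exact Or.inl (Or.inr ⟨h, h'⟩))
  have hc : Coded231 ⇑p j := by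
    intro a b hab
    rw [hp]
    simp [hab, hab.asymm]
  refine ⟨p, ?_, hc⟩
  rintro ⟨x, y, z, hxy, hyz, h1, h2⟩
  rw [hc x z (hxy.trans hyz)] at h1
  exact absurd ((hc x y hxy).2 fun s h h' => h1 s h (h'.trans hyz.le)) h2.asymm

/-- The 132-rule defines a strict total order for any sequence `j`, and its permutation avoids
132. -/
lemma exists_coded132 {N : ℕ} (j : Fin N → ℕ) :
    ∃ p : Equiv.Perm (Fin N), Avoids132 ⇑p ∧ Coded132 ⇑p j := by
  obtain ⟨p, hp⟩ := exists_perm_of_order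
    (fun a b : Fin N => (a < b ∧ ∀ s, a ≤ s → s < b → j b ≤ j s) ∨
      (b < a ∧ ∃ s, b ≤ s ∧ s < a ∧ j s < j a))
    (by intro a h; simp at h)
    (by
      rintro a b c (⟨hab, h1⟩ | ⟨hab, s, hs1, hs2, hs3⟩) (⟨hbc, h2⟩ | ⟨hbc, t, ht1, ht2, ht3⟩)
      · refine Or.inl ⟨hab.trans hbc, fun s h h' => ?_⟩
        by_cases hsb : b ≤ s
        · exact h2 s hsb h'
        · exact (h2 b le_rfl hbc).trans (h1 s h (not_le.mp hsb))
      · by_cases hta : a ≤ t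
        · exact absurd ht3 (not_lt.mpr (h1 t hta ht2))
        · rw [not_le] at hta
          exact Or.inr ⟨ht1.trans_lt hta, t, ht1, hta, ht3.trans_le (h1 a le_rfl hab)⟩
      · rcases lt_trichotomy a c with hac | rfl | hac
        · exact Or.inl ⟨hac, fun s h h' => h2 s (hab.le.trans h) h'⟩
        · exact absurd hs3 (not_lt.mpr (h2 s hs1 hs2))
        · refine Or.inr ⟨hac, ?_⟩
          by_cases hsc : c ≤ s
          · exact ⟨s, hsc, hs2, hs3⟩
          · exact ⟨c, le_rfl, hac, (h2 s hs1 (not_le.mp hsc)).trans_lt hs3⟩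
      · exact Or.inr ⟨hbc.trans hab, s, hbc.le.trans hs1, hs2, hs3⟩)
    (by
      have key : ∀ a b : Fin N, a < b → (∀ s, a ≤ s → s < b → j b ≤ j s) ∨
          (∃ s, a ≤ s ∧ s < b ∧ j s < j b) := by
        intro a b _
        by_contra! h
        obtain ⟨⟨s, hs1, hs2, hs3⟩, h1⟩ := h
        exact absurd (h1 s hs1 hs2) (not_le.mpr hs3)
      intro a b hne
      rcases lt_or_gt_of_ne hne with h | h
      · rcases key a b h with h' | h'
        · exact Or.inl (Or.inl ⟨h, h'⟩)
        · exact Or.inr (Or.inr ⟨h, h'⟩)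
      · rcases key b a h with h' | h'
        · exact Or.inr (Or.inl ⟨h, h'⟩)
        · exact Or.inl (Or.inr ⟨h, h'⟩))
  have hc : Coded132 ⇑p j := by
    intro a b hab
    rw [hp]
    simp [hab, hab.asymm]
  refine ⟨p, ?_, hc⟩
  rintro ⟨x, y, z, hxy, hyz, h1, h2⟩
  rw [hc x z (hxy.trans hyz)] at h1
  exact absurd ((hc y z hyz).2 fun s h h' => h1 s (hxy.le.trans h) h') h2.asymm

/-! ### Encoding: from avoiders to codes -/

/-- The code of a 231-avoider counts, for each entry, the larger entries to its left. -/
lemma exists_code_of_avoids231 {N : ℕ} (p : Equiv.Perm (Fin N)) (hp : Avoids231 ⇑p) :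
    ∃ j : Fin N → ℕ, IsCode j ∧ Coded231 ⇑p j := by
  classical
  let S : Fin N → Finset (Fin N) := fun b => Finset.univ.filter (fun a => a < b ∧ p b < p a)
  have mS : ∀ a b, a ∈ S b ↔ a < b ∧ p b < p a := by simp [S]
  refine ⟨fun b => (S b).card, ⟨?_, ?_⟩, ?_⟩
  · intro i hi
    rw [Finset.card_eq_zero, Finset.eq_empty_iff_forall_notMem]
    intro a ha
    have := ((mS _ _).1 ha).1
    rw [Fin.lt_def] at this
    omega
  · intro i i' hi
    refine (Finset.card_le_card (t := insert i (S i)) ?_).trans (Finset.card_insert_le _ _)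
    intro a ha
    rw [mS] at ha
    rw [Finset.mem_insert, mS]
    rcases eq_or_ne a i with h | h
    · exact Or.inl h
    · have hai : a < i := by
        have := ha.1
        rw [Fin.lt_def] at this ⊢
        have := Fin.val_ne_of_ne h
        omega
      refine Or.inr ⟨hai, ?_⟩
      by_contra hlt
      have hne : p a ≠ p i := fun h' => h (p.injective h')
      exact hp ⟨a, i, i', hai, by rw [Fin.lt_def]; omega, ha.2,
        lt_of_le_of_ne (not_lt.mp hlt) hne⟩
  · intro a b hab
    constructor
    · intro hba s has hsb
      have hsa : p s < p a := by
        by_contra h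
        have hne : p a ≠ p s := fun h' => has.ne (p.injective h')
        rcases hsb.eq_or_lt with rfl | hsb
        · exact h hba
        · exact hp ⟨a, s, b, has, hsb, hba, lt_of_le_of_ne (not_lt.mp h) hne⟩
      apply Finset.card_lt_card
      rw [Finset.ssubset_iff_of_subset]
      · exact ⟨a, (mS _ _).2 ⟨has, hsa⟩, fun h => lt_irrefl _ ((mS _ _).1 h).1⟩
      · intro c hc
        rw [mS] at hc ⊢
        exact ⟨hc.1.trans has, hsa.trans hc.2⟩
    · intro h
      by_contra hba
      have hab' : p a < p b :=
        lt_of_le_of_ne (not_lt.mp hba) fun heq => hab.ne (p.injective heq)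
      -- The first position after `a` with a larger entry has a code value at most that of `a`.
      let T := Finset.univ.filter (fun s => a < s ∧ p a < p s)
      have hT : T.Nonempty := ⟨b, by simp [T, hab, hab']⟩
      have hmin := T.min'_mem hT
      set s := T.min' hT with hs
      have hs' : a < s ∧ p a < p s := by simpa [T] using hmin
      have hsb : s ≤ b := Finset.min'_le _ _ (by simp [T, hab, hab'])
      refine absurd (h s hs'.1 hsb) (not_lt.mpr (Finset.card_le_card ?_))
      intro c hc
      rw [mS] at hc ⊢
      have hac : p a < p c := hs'.2.trans hc.2
      refine ⟨?_, hac⟩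
      by_contra hca
      have hac' : a < c := lt_of_le_of_ne (not_lt.mp hca) fun h => by simp [h] at hac
      exact absurd (Finset.min'_le T c (by simp [T, hac', hac])) (not_le.mpr hc.1)

/-- The code of a 132-avoider counts, for each position `b`, the positions `a < b` whose entry
exceeds all entries at positions in `(a, b]`. -/
lemma exists_code_of_avoids132 {N : ℕ} (p : Equiv.Perm (Fin N)) (hp : Avoids132 ⇑p) :
    ∃ j : Fin N → ℕ, IsCode j ∧ Coded132 ⇑p j := by
  classical
  let S : Fin N → Finset (Fin N) := fun b =>
    Finset.univ.filter (fun a => a < b ∧ ∀ c, a < c → c ≤ b → p c < p a)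
  have mS : ∀ a b, a ∈ S b ↔ a < b ∧ ∀ c, a < c → c ≤ b → p c < p a := by simp [S]
  refine ⟨fun b => (S b).card, ⟨?_, ?_⟩, ?_⟩
  · intro i hi
    rw [Finset.card_eq_zero, Finset.eq_empty_iff_forall_notMem]
    intro a ha
    have := ((mS _ _).1 ha).1
    rw [Fin.lt_def] at this
    omega
  · intro i i' hi
    refine (Finset.card_le_card (t := insert i (S i)) ?_).trans (Finset.card_insert_le _ _)
    intro a ha
    rw [mS] at ha
    rw [Finset.mem_insert, mS]
    have hii : i ≤ i' := by rw [Fin.le_def]; omega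
    rcases eq_or_ne a i with h | h
    · exact Or.inl h
    · refine Or.inr ⟨?_, fun c h1 h2 => ha.2 c h1 (h2.trans hii)⟩
      have := ha.1
      rw [Fin.lt_def] at this ⊢
      have := Fin.val_ne_of_ne h
      omega
  · intro a b hab
    constructor
    · intro hlt s has hsb
      apply Finset.card_le_card
      intro c hc
      rw [mS] at hc ⊢
      refine ⟨?_, fun d h1 h2 => hc.2 d h1 (h2.trans hsb.le)⟩
      by_contra hcs
      have hbc := hc.2 b hc.1 le_rfl
      have hac : a < c := lt_of_le_of_ne (has.trans (not_lt.mp hcs)) fun h => by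
        rw [h] at hlt
        exact hlt.asymm hbc
      exact hp ⟨a, c, b, hac, hc.1, hlt, hbc⟩
    · intro h
      by_contra hlt
      have hba : p b < p a :=
        lt_of_le_of_ne (not_lt.mp hlt) fun heq => hab.ne (p.injective heq.symm)
      -- The position of the largest entry in `[a, b)` has a smaller code value than `b`.
      obtain ⟨s, hs, hmax⟩ := Finset.exists_max_image (Finset.Ico a b) (fun x => p x)
        ⟨a, by simp [hab]⟩
      rw [Finset.mem_Ico] at hs
      have hle : ∀ c, a ≤ c → c ≤ b → p c ≤ p s := by
        intro c h1 h2
        rcases h2.eq_or_lt with rfl | h2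
        · exact hba.le.trans (hmax a (by simp [hab]))
        · exact hmax c (by simp [h1, h2])
      refine absurd (h s hs.1 hs.2) (not_le.mpr (Finset.card_lt_card ?_))
      rw [Finset.ssubset_iff_of_subset]
      · refine ⟨s, (mS _ _).2 ⟨hs.2, fun c h1 h2 => ?_⟩, fun h => lt_irrefl _ ((mS _ _).1 h).1⟩
        exact lt_of_le_of_ne (hle c (hs.1.trans h1.le) h2) fun h' => h1.ne' (p.injective h')
      · intro c hc
        rw [mS] at hc ⊢
        refine ⟨hc.1.trans hs.2, fun d h1 h2 => ?_⟩
        by_cases hds : d ≤ s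
        · exact hc.2 d h1 hds
        · exact (hle d (hs.1.trans (not_le.mp hds).le) h2).trans_lt (hc.2 s hc.1 le_rfl)

/-! ### Prefixes of codes and prefixes of permutations -/

/-- The last position before `b` where the code is below `j b` has value exactly `j b - 1`, since
codes go up by at most one at a time. -/
lemma IsCode.exists_last_lt {N : ℕ} {j : Fin N → ℕ} (hj : IsCode j) {b : Fin N} (hb : 0 < j b) :
    ∃ a, a < b ∧ j a + 1 = j b ∧ ∀ s, a < s → s < b → j b ≤ j s := by
  classical
  let T := Finset.univ.filter (fun a => a < b ∧ j a < j b)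
  have hT : T.Nonempty := by
    refine ⟨⟨0, b.pos⟩, ?_⟩
    have h0 : j ⟨0, b.pos⟩ = 0 := hj.1 _ rfl
    simp only [T, Finset.mem_filter, Finset.mem_univ, true_and, h0, hb, and_true]
    rw [Fin.lt_def]
    by_contra h
    have : j b = 0 := hj.1 b (by simpa using h)
    omega
  have hmem := T.max'_mem hT
  set a := T.max' hT with ha
  have ha' : a < b ∧ j a < j b := by simpa [T] using hmem
  have hmax : ∀ s, a < s → s < b → j b ≤ j s := by
    intro s h1 h2
    by_contra h
    exact absurd (T.le_max' s (by simp [T, h2, not_le.mp h])) (not_le.mpr h1)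
  refine ⟨a, ha'.1, ?_, hmax⟩
  have hab : a.val < b.val := ha'.1
  have hN := b.isLt
  have hstep := hj.2 a ⟨a.val + 1, by omega⟩ rfl
  have : j b ≤ j ⟨a.val + 1, by omega⟩ := by
    rcases (show a.val + 1 = b.val ∨ a.val + 1 < b.val by omega) with h | h
    · exact le_of_eq (congrArg j (Fin.ext h.symm))
    · exact hmax _ (by rw [Fin.lt_def]; simp) h
  omega

lemma Coded231.not_lt_of_agree {N : ℕ} {π π' : Fin N → Fin N} {j j' : Fin N → ℕ}
    (h : Coded231 π j) (h' : Coded231 π' j') (hj' : IsCode j') {b : Fin N}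
    (hpre : ∀ s, s < b → j s = j' s) (hord : ∀ a, a < b → (π b < π a ↔ π' b < π' a)) :
    ¬ j b < j' b := by
  intro hlt
  obtain ⟨a, hab, ha, hs⟩ := hj'.exists_last_lt (b := b) (by omega)
  have h1 : π' b < π' a := (h' a b hab).2 fun s h1 h2 => by
    rcases h2.eq_or_lt with rfl | h2
    · omega
    · have := hs s h1 h2
      omega
  have h2 := (h a b hab).1 ((hord a hab).2 h1) b hab le_rfl
  have := hpre a hab
  omega

lemma Coded132.not_lt_of_agree {N : ℕ} {π π' : Fin N → Fin N} {j j' : Fin N → ℕ}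
    (h : Coded132 π j) (h' : Coded132 π' j') (hj' : IsCode j') {b : Fin N}
    (hpre : ∀ s, s < b → j s = j' s) (hord : ∀ a, a < b → (π a < π b ↔ π' a < π' b)) :
    ¬ j b < j' b := by
  intro hlt
  obtain ⟨a, hab, ha, hs⟩ := hj'.exists_last_lt (b := b) (by omega)
  have h1 : π a < π b := (h a b hab).2 fun s h1 h2 => by
    have e := hpre s h2
    rcases h1.eq_or_lt with rfl | h1
    · omega
    · have := hs s h1 h2
      omega
  have h2 := (h' a b hab).1 ((hord a hab).1 h1) a le_rfl hab
  omega

/-- `PrefixEq` with positions ranging over `Fin N`. -/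
lemma prefixEq_iff {N : ℕ} (π π' : Fin N → Fin N) (i : ℕ) (h : i ≤ N) :
    PrefixEq π π' i h h ↔
      ∀ a b : Fin N, a.val < i → b.val < i → (π a < π b ↔ π' a < π' b) :=
  ⟨fun H a b ha hb => H ⟨a, ha⟩ ⟨b, hb⟩, fun H a b => H _ _ a.isLt b.isLt⟩

/-- Permutations have the same order as soon as they agree on pairs of positions written
in increasing order. -/
lemma order_agree_of_lt {N : ℕ} {p q : Equiv.Perm (Fin N)} {i : ℕ}
    (H : ∀ a b : Fin N, a < b → b.val < i → (p a < p b ↔ q a < q b)) :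
    ∀ a b : Fin N, a.val < i → b.val < i → (p a < p b ↔ q a < q b) := by
  have flip : ∀ (r : Equiv.Perm (Fin N)) (a b : Fin N), a ≠ b → (r a < r b ↔ ¬ r b < r a) :=
    fun r a b hab => ⟨fun h => h.asymm, fun h =>
      lt_of_le_of_ne (not_lt.mp h) fun h' => hab (r.injective h')⟩
  intro a b ha hb
  rcases lt_trichotomy a b with hab | rfl | hab
  · exact H a b hab hb
  · simp
  · rw [flip p a b hab.ne', flip q a b hab.ne', H b a hab ha]

lemma Coded231.prefixEq_iff_code {N : ℕ} {p q : Equiv.Perm (Fin N)} {j j' : Fin N → ℕ}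
    (hj : IsCode j) (hj' : IsCode j') (h : Coded231 ⇑p j) (h' : Coded231 ⇑q j')
    (i : ℕ) (hi : i ≤ N) :
    PrefixEq ⇑p ⇑q i hi hi ↔ ∀ s : Fin N, s.val < i → j s = j' s := by
  rw [prefixEq_iff]
  constructor
  · intro H s
    induction s using WellFoundedLT.induction with
    | ind b ih =>
      intro hb
      have hlt : ∀ s : Fin N, s < b → s.val < i := fun s hs => lt_trans hs hb
      have h1 := h.not_lt_of_agree h' hj' (b := b) (fun s hs => ih s hs (hlt s hs))
        fun a ha => H b a hb (hlt a ha)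
      have h2 := h'.not_lt_of_agree h hj (b := b) (fun s hs => (ih s hs (hlt s hs)).symm)
        fun a ha => (H b a hb (hlt a ha)).symm
      omega
  · intro H
    have key : ∀ a b : Fin N, a < b → b.val < i → (p b < p a ↔ q b < q a) := by
      intro a b hab hb
      rw [h a b hab, h' a b hab]
      refine forall_congr' fun s => forall_congr' fun _ => forall_congr' fun hs => ?_
      rw [H a (lt_trans hab hb), H s (lt_of_le_of_lt hs hb)]
    apply order_agree_of_lt
    intro a b hab hb
    have := key a b hab hb
    have hp : p a ≠ p b := fun e => hab.ne (p.injective e)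
    have hq : q a ≠ q b := fun e => hab.ne (q.injective e)
    rw [← not_iff_not, not_lt, not_lt, hp.symm.le_iff_lt, hq.symm.le_iff_lt, this]

lemma Coded132.prefixEq_iff_code {N : ℕ} {p q : Equiv.Perm (Fin N)} {j j' : Fin N → ℕ}
    (hj : IsCode j) (hj' : IsCode j') (h : Coded132 ⇑p j) (h' : Coded132 ⇑q j')
    (i : ℕ) (hi : i ≤ N) :
    PrefixEq ⇑p ⇑q i hi hi ↔ ∀ s : Fin N, s.val < i → j s = j' s := by
  rw [prefixEq_iff]
  constructor
  · intro H s
    induction s using WellFoundedLT.induction with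
    | ind b ih =>
      intro hb
      have hlt : ∀ s : Fin N, s < b → s.val < i := fun s hs => lt_trans hs hb
      have h1 := h.not_lt_of_agree h' hj' (b := b) (fun s hs => ih s hs (hlt s hs))
        fun a ha => H a b (hlt a ha) hb
      have h2 := h'.not_lt_of_agree h hj (b := b) (fun s hs => (ih s hs (hlt s hs)).symm)
        fun a ha => (H a b (hlt a ha) hb).symm
      omega
  · intro H
    apply order_agree_of_lt
    intro a b hab hb
    rw [h a b hab, h' a b hab]
    refine forall_congr' fun s => forall_congr' fun _ => forall_congr' fun hs => ?_
    rw [H b hb, H s (lt_trans hs hb)]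

lemma eq_of_prefixEq {N : ℕ} {p q : Equiv.Perm (Fin N)} (h : PrefixEq ⇑p ⇑q N le_rfl le_rfl) :
    p = q := by
  rw [prefixEq_iff] at h
  -- `q ∘ p⁻¹` is strictly monotone on `Fin N`, hence the identity.
  have hm : StrictMono (fun x => q (p.symm x)) := fun x y hxy =>
    (h (p.symm x) (p.symm y) (Fin.isLt _) (Fin.isLt _)).1 (by simpa using hxy)
  let e : Fin N ≃o Fin N := hm.orderIsoOfSurjective _ fun y => ⟨p (q.symm y), by simp⟩
  ext x
  have hx : q (p.symm (p x)) = p x :=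
    congrArg (fun f : Fin N ≃o Fin N => f (p x)) (Subsingleton.elim e (OrderIso.refl _))
  rw [← hx, Equiv.symm_apply_apply]

/-! ### The position of the maximum -/

lemma IsCode.exists_last_zero {N : ℕ} (hN : 1 ≤ N) {j : Fin N → ℕ} (hj : IsCode j) :
    ∃ m, j m = 0 ∧ ∀ s, m < s → 0 < j s := by
  classical
  let T := Finset.univ.filter (fun a => j a = 0)
  have hT : T.Nonempty := ⟨⟨0, hN⟩, by simpa [T] using hj.1 ⟨0, hN⟩ rfl⟩
  refine ⟨T.max' hT, by simpa [T] using T.max'_mem hT, fun s hs => ?_⟩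
  by_contra h
  exact absurd (T.le_max' s (by simpa [T] using h)) (not_le.mpr hs)

lemma symm_max_eq {N : ℕ} (hN : N - 1 < N) {p : Equiv.Perm (Fin N)} {m : Fin N}
    (h : ∀ a, p a ≤ p m) : p.symm ⟨N - 1, hN⟩ = m := by
  rw [Equiv.symm_apply_eq]
  have := h (p.symm ⟨N - 1, hN⟩)
  rw [Equiv.apply_symm_apply, Fin.le_def] at this
  have h2 := (p m).isLt
  apply Fin.ext
  simp only at this ⊢
  omega

lemma Coded231.le_of_last_zero {N : ℕ} {p : Equiv.Perm (Fin N)} {j : Fin N → ℕ}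
    (h : Coded231 ⇑p j) {m : Fin N} (h0 : j m = 0) (hm : ∀ s, m < s → 0 < j s) (a : Fin N) :
    p a ≤ p m := by
  rcases lt_trichotomy a m with ha | rfl | ha
  · rw [← not_lt, h a m ha]
    intro H
    have := H m ha le_rfl
    omega
  · exact le_rfl
  · exact ((h m a ha).2 fun s hs _ => by rw [h0]; exact hm s hs).le

lemma Coded132.le_of_last_zero {N : ℕ} {p : Equiv.Perm (Fin N)} {j : Fin N → ℕ}
    (h : Coded132 ⇑p j) {m : Fin N} (h0 : j m = 0) (hm : ∀ s, m < s → 0 < j s) (a : Fin N) :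
    p a ≤ p m := by
  rcases lt_trichotomy a m with ha | rfl | ha
  · exact ((h a m ha).2 fun s _ _ => by rw [h0]; exact Nat.zero_le _).le
  · exact le_rfl
  · rw [← not_lt, h m a ha]
    intro H
    have := H m le_rfl ha
    have := hm a ha
    omega

/-! ### The two bijections with codes -/

lemma exists_equiv231 (N : ℕ) :
    ∃ e : {j : Fin N → ℕ // IsCode j} ≃ {π : Equiv.Perm (Fin N) // Avoids231 ⇑π},
      ∀ j, Coded231 ⇑(e j).1 j.1 := by
  choose d hd1 hd2 using fun j : Fin N → ℕ => exists_coded231 j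
  refine ⟨Equiv.ofBijective (fun j => ⟨d j.1, hd1 j.1⟩) ⟨?_, ?_⟩, fun j => hd2 j.1⟩
  · intro j j' hjj
    have e : d j.1 = d j'.1 := congrArg Subtype.val hjj
    have := (Coded231.prefixEq_iff_code j.2 j'.2 (hd2 j.1) (hd2 j'.1) N le_rfl).1
      (by rw [e]; exact fun _ _ => Iff.rfl)
    exact Subtype.ext (funext fun s => this s s.isLt)
  · rintro ⟨p, hp⟩
    obtain ⟨j, hj, hc⟩ := exists_code_of_avoids231 p hp
    exact ⟨⟨j, hj⟩, Subtype.ext (eq_of_prefixEq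
      ((Coded231.prefixEq_iff_code hj hj (hd2 j) hc N le_rfl).2 fun _ _ => rfl))⟩

lemma exists_equiv132 (N : ℕ) :
    ∃ e : {j : Fin N → ℕ // IsCode j} ≃ {π : Equiv.Perm (Fin N) // Avoids132 ⇑π},
      ∀ j, Coded132 ⇑(e j).1 j.1 := by
  choose d hd1 hd2 using fun j : Fin N → ℕ => exists_coded132 j
  refine ⟨Equiv.ofBijective (fun j => ⟨d j.1, hd1 j.1⟩) ⟨?_, ?_⟩, fun j => hd2 j.1⟩
  · intro j j' hjj
    have e : d j.1 = d j'.1 := congrArg Subtype.val hjj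
    have := (Coded132.prefixEq_iff_code j.2 j'.2 (hd2 j.1) (hd2 j'.1) N le_rfl).1
      (by rw [e]; exact fun _ _ => Iff.rfl)
    exact Subtype.ext (funext fun s => this s s.isLt)
  · rintro ⟨p, hp⟩
    obtain ⟨j, hj, hc⟩ := exists_code_of_avoids132 p hp
    exact ⟨⟨j, hj⟩, Subtype.ext (eq_of_prefixEq
      ((Coded132.prefixEq_iff_code hj hj (hd2 j) hc N le_rfl).2 fun _ _ => rfl))⟩

/-- the prefix trees of the 231-avoiding and 132-avoiding games are isomorphic:
there is a bijection preserving the position of the maximum value and preserving equality of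
`i`-th prefix flattenings. -/
theorem stmt4 {N : ℕ} (hN : 1 ≤ N) :
    ∃ Υ : {π : Equiv.Perm (Fin N) // Avoids231 ⇑π} ≃
          {π : Equiv.Perm (Fin N) // Avoids132 ⇑π},
      (∀ π : {π : Equiv.Perm (Fin N) // Avoids231 ⇑π},
        ((Υ π).1).symm ⟨N - 1, by omega⟩ = (π.1).symm ⟨N - 1, by omega⟩) ∧
      (∀ π π' : {π : Equiv.Perm (Fin N) // Avoids231 ⇑π}, ∀ i : ℕ, 1 ≤ i → ∀ h : i ≤ N,
        (PrefixEq ⇑π.1 ⇑π'.1 i h h ↔ PrefixEq ⇑(Υ π).1 ⇑(Υ π').1 i h h)) := by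
  obtain ⟨e, he⟩ := exists_equiv231 N
  obtain ⟨f, hf⟩ := exists_equiv132 N
  refine ⟨e.symm.trans f, fun π => ?_, fun π π' i _ h => ?_⟩
  · obtain ⟨j, rfl⟩ := e.surjective π
    obtain ⟨m, h0, hm⟩ := j.2.exists_last_zero hN
    rw [Equiv.trans_apply, Equiv.symm_apply_apply,
      symm_max_eq _ ((he j).le_of_last_zero h0 hm), symm_max_eq _ ((hf j).le_of_last_zero h0 hm)]
  · obtain ⟨j, rfl⟩ := e.surjective π
    obtain ⟨j', rfl⟩ := e.surjective π'
    rw [Equiv.trans_apply, Equiv.trans_apply, Equiv.symm_apply_apply, Equiv.symm_apply_apply,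
      Coded231.prefixEq_iff_code j.2 j'.2 (he j) (he j'),
      Coded132.prefixEq_iff_code j.2 j'.2 (hf j) (hf j')]
end

section
/- For all 1 ≤ k ≤ N, the number of 321-avoiding permutations π of size N whose first k entries are increasing (π_1 < π_2 < ⋯ < π_k) equals the ballot number C(N,k) = ((k+1)/(N+1))·binom(2N−k, N). -/
/-- The property counted by the theorem: `π` avoids 321 and its first `k` entries increase. -/
def IncPrefix {n : ℕ} (k : ℕ) (π : Equiv.Perm (Fin n)) : Prop :=
  Avoids321 ⇑π ∧ ∀ a b : Fin n, a < b → b.val < k → π a < π b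

/-- The number of 321-avoiding permutations of size `n` whose first `k` entries increase. -/
noncomputable def prefixCount (n k : ℕ) : ℕ :=
  Nat.card {π : Equiv.Perm (Fin n) // IncPrefix k π}

/-- Insert a new minimal entry at position `p` of the one-line notation of `σ`. -/
def insertMin {n : ℕ} (p : Fin (n + 1)) (σ : Equiv.Perm (Fin n)) : Equiv.Perm (Fin (n + 1)) :=
  (finSuccEquiv' p).trans ((Equiv.optionCongr σ).trans (finSuccEquiv' 0).symm)

@[simp] lemma insertMin_self {n : ℕ} (p : Fin (n + 1)) (σ : Equiv.Perm (Fin n)) :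
    insertMin p σ p = 0 := by
  simp [insertMin]

@[simp] lemma insertMin_succAbove {n : ℕ} (p : Fin (n + 1)) (σ : Equiv.Perm (Fin n)) (i : Fin n) :
    insertMin p σ (p.succAbove i) = (σ i).succ := by
  simp [insertMin]

lemma insertMin_bijective (n : ℕ) :
    Function.Bijective (fun x : Fin (n + 1) × Equiv.Perm (Fin n) => insertMin x.1 x.2) := by
  -- Both sides have `(n + 1)!` elements, so injectivity suffices.
  rw [Fintype.bijective_iff_injective_and_card]
  constructor
  · rintro ⟨p, σ⟩ ⟨q, τ⟩ h
    simp only at h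
    have hpq : p = q := by
      apply (insertMin q τ).injective
      rw [← h, insertMin_self, h, insertMin_self]
    subst hpq
    congr 1
    ext i
    have := congrArg (fun e : Equiv.Perm (Fin (n + 1)) => e (p.succAbove i)) h
    simp only [insertMin_succAbove, Fin.succ_inj] at this
    rw [this]
  · simp [Fintype.card_prod, Fintype.card_perm, Nat.factorial_succ]

/-- Deleting the minimum at position `p`: for `p = 0` the remaining permutation has one fewer
increasing initial entries, otherwise `p > k` and the first `p` remaining entries increase. -/
lemma insertMin_mem_iff {n : ℕ} (k : ℕ) (p : Fin (n + 1)) (σ : Equiv.Perm (Fin n)) :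
    IncPrefix (k + 1) (insertMin p σ) ↔
      (p.val = 0 ∧ IncPrefix k σ) ∨ (k + 1 ≤ p.val ∧ IncPrefix p.val σ) := by
  have hmono : ∀ a b : Fin n, a < b → p.succAbove a < p.succAbove b := fun a b h =>
    Fin.strictMono_succAbove p h
  constructor
  · rintro ⟨hav, hinc⟩
    have hσ : Avoids321 ⇑σ := by
      rintro ⟨i, j, l, hij, hjl, h1, h2⟩
      exact hav ⟨p.succAbove i, p.succAbove j, p.succAbove l, hmono _ _ hij, hmono _ _ hjl,
        by simpa using h1, by simpa using h2⟩
    rcases Nat.eq_zero_or_pos p.val with hp | hp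
    · left
      refine ⟨hp, hσ, fun a b hab hb => ?_⟩
      have hp0 : p = 0 := Fin.ext hp
      have := hinc (p.succAbove a) (p.succAbove b) (hmono _ _ hab) (by subst hp0; simpa using hb)
      simpa using this
    · right
      refine ⟨?_, hσ, fun a b hab hb => ?_⟩
      · by_contra hlt
        have := hinc 0 p hp (by omega)
        simp at this
      · -- A descent before `p`, followed by the minimum at `p`, would be a 321.
        by_contra hcon
        have hne : σ a ≠ σ b := fun h => hab.ne (σ.injective h)
        have hlt : σ b < σ a := lt_of_le_of_ne (not_lt.mp hcon) hne.symm
        refine hav ⟨p.succAbove a, p.succAbove b, p, hmono _ _ hab, ?_, ?_, ?_⟩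
        · rw [Fin.succAbove_lt_iff_castSucc_lt]; exact hb
        · simp
        · simpa using hlt
  · intro h
    have hσ : Avoids321 ⇑σ := by rcases h with h | h <;> exact h.2.1
    have hbefore : ∀ a b : Fin n, a < b → b.val < p.val → σ a < σ b := by
      rcases h with h | h
      · intro a b _ hb; omega
      · exact h.2.2
    refine ⟨?_, ?_⟩
    · rintro ⟨i, j, l, hij, hjl, h1, h2⟩
      rcases Fin.eq_self_or_eq_succAbove p i with rfl | ⟨i, rfl⟩
      · simp at h2
      rcases Fin.eq_self_or_eq_succAbove p j with rfl | ⟨j, rfl⟩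
      · simp at h1
      have hij' : i < j := (Fin.strictMono_succAbove p).lt_iff_lt.mp hij
      have h2' : σ j < σ i := by simpa using h2
      rcases Fin.eq_self_or_eq_succAbove p l with rfl | ⟨l, rfl⟩
      · rw [Fin.succAbove_lt_iff_castSucc_lt] at hjl
        exact lt_asymm h2' (hbefore i j hij' hjl)
      · exact hσ ⟨i, j, l, hij', (Fin.strictMono_succAbove p).lt_iff_lt.mp hjl,
          by simpa using h1, h2'⟩
    · intro a b hab hb
      rcases Fin.eq_self_or_eq_succAbove p b with rfl | ⟨b, rfl⟩
      · have : a.val < b.val := hab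
        omega
      rcases Fin.eq_self_or_eq_succAbove p a with rfl | ⟨a, rfl⟩
      · simp
      have hab' : a < b := (Fin.strictMono_succAbove p).lt_iff_lt.mp hab
      suffices σ a < σ b by simpa using this
      rcases h with ⟨hp, h⟩ | ⟨hp, h⟩
      · have hp0 : p = 0 := Fin.ext hp
        subst hp0
        exact h.2 a b hab' (by simpa using hb)
      · refine h.2 a b hab' ?_
        have : b.val ≤ (p.succAbove b).val := by
          unfold Fin.succAbove; split_ifs <;> simp
        omega

lemma prefixCount_succ_succ (n k : ℕ) :
    prefixCount (n + 1) (k + 1) =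
      prefixCount n k + ∑ p ∈ Finset.range n, if k ≤ p then prefixCount n (p + 1) else 0 := by
  classical
  have e1 : {x : Fin (n + 1) × Equiv.Perm (Fin n) // IncPrefix (k + 1) (insertMin x.1 x.2)} ≃
      {π : Equiv.Perm (Fin (n + 1)) // IncPrefix (k + 1) π} :=
    (Equiv.ofBijective _ (insertMin_bijective n)).subtypeEquiv (fun _ => Iff.rfl)
  have e2 : {x : Fin (n + 1) × Equiv.Perm (Fin n) // IncPrefix (k + 1) (insertMin x.1 x.2)} ≃
      Σ p : Fin (n + 1), {σ : Equiv.Perm (Fin n) // IncPrefix (k + 1) (insertMin p σ)} :=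
    { toFun := fun x => ⟨x.1.1, x.1.2, x.2⟩
      invFun := fun x => ⟨(x.1, x.2.1), x.2.2⟩
      left_inv := fun _ => rfl
      right_inv := fun _ => rfl }
  unfold prefixCount
  rw [← Nat.card_congr e1, Nat.card_congr e2, Nat.card_sigma, Fin.sum_univ_succ,
    ← Fin.sum_univ_eq_sum_range
      (fun p => if k ≤ p then Nat.card {π : Equiv.Perm (Fin n) // IncPrefix (p + 1) π} else 0)]
  congr 1
  · refine Nat.card_congr (Equiv.subtypeEquivRight fun σ => ?_)
    rw [insertMin_mem_iff]
    simp
  · refine Finset.sum_congr rfl fun p _ => ?_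
    split_ifs with hp
    · refine Nat.card_congr (Equiv.subtypeEquivRight fun σ => ?_)
      rw [insertMin_mem_iff]
      simp [hp]
    · have : IsEmpty {σ : Equiv.Perm (Fin n) // IncPrefix (k + 1) (insertMin p.succ σ)} := by
        refine ⟨fun ⟨σ, hσ⟩ => ?_⟩
        rw [insertMin_mem_iff] at hσ
        simp [hp] at hσ
      simp

lemma prefixCount_recurrence {n j : ℕ} (hj : j < n) :
    prefixCount (n + 1) (j + 1) = prefixCount (n + 1) (j + 2) + prefixCount n j := by
  have hsplit : ∀ p, (if j ≤ p then prefixCount n (p + 1) else 0) =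
      (if j = p then prefixCount n (p + 1) else 0) +
        (if j + 1 ≤ p then prefixCount n (p + 1) else 0) := by
    intro p
    rcases lt_trichotomy j p with h | h | h
    · simp [h.le, h.ne, Nat.succ_le_iff.mpr h]
    · simp [h]
    · simp [not_le.mpr h, h.ne', show ¬ j + 1 ≤ p by omega]
  rw [prefixCount_succ_succ n j, prefixCount_succ_succ n (j + 1),
    Finset.sum_congr rfl fun p _ => hsplit p, Finset.sum_add_distrib, Finset.sum_ite_eq,
    if_pos (Finset.mem_range.mpr hj)]
  ring

lemma prefixCount_diag (n : ℕ) : prefixCount (n + 1) (n + 1) = prefixCount n n := by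
  rw [prefixCount_succ_succ, Finset.sum_eq_zero, add_zero]
  intro p hp
  rw [Finset.mem_range] at hp
  rw [if_neg (by omega)]

/-- A prefix of length at most one is always increasing. -/
lemma prefixCount_one (n : ℕ) : prefixCount n 0 = prefixCount n 1 := by
  refine Nat.card_congr (Equiv.subtypeEquivRight fun σ => ?_)
  refine and_congr Iff.rfl ⟨fun _ a b hab hb => ?_, fun _ a b _ hb => ?_⟩
  · have : a.val < b.val := hab
    omega
  · omega

lemma prefixCount_zero_zero : prefixCount 0 0 = 1 := by
  unfold prefixCount
  rw [Nat.card_eq_one_iff_unique]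
  exact ⟨inferInstance, ⟨1, by rintro ⟨i, _⟩; exact i.elim0, fun a => a.elim0⟩⟩

/-- The ballot number as a difference of binomial coefficients. Here `d = n - k`, so that
`2 * n - k = n + d`. -/
lemma prefixCount_add_choose (n : ℕ) : ∀ d k : ℕ, k + d = n →
    prefixCount n k + (n + d).choose (n + 1) = (n + d).choose n := by
  induction n with
  | zero =>
    intro d k h
    obtain ⟨rfl, rfl⟩ : k = 0 ∧ d = 0 := by omega
    simp [prefixCount_zero_zero]
  | succ n ih =>
    intro d
    induction d with
    | zero =>
      rintro k rfl
      have h := ih 0 n rfl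
      simp only [add_zero, Nat.choose_succ_self, Nat.choose_self] at h ⊢
      rw [prefixCount_diag, h]
    | succ d ihd =>
      intro k hk
      have h1 := ihd (k + 1) (by omega)
      have e1 : n + 1 + (d + 1) = (n + 1 + d) + 1 := by ring
      rw [e1, Nat.choose_succ_succ' (n + 1 + d) (n + 1), Nat.choose_succ_succ' (n + 1 + d) n]
      rcases k with _ | j
      · -- Here `d = n`, and `choose (2n+1) n = choose (2n+1) (n+1)`.
        obtain rfl : d = n := by omega
        have hs := Nat.choose_symm_half d
        rw [show 2 * d + 1 = d + 1 + d by ring] at hs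
        rw [prefixCount_one]
        simp only [zero_add] at h1
        omega
      · have h2 := ih (d + 1) j (by omega)
        rw [show n + (d + 1) = n + 1 + d by ring] at h2
        rw [prefixCount_recurrence (by omega)]
        have : j + 1 + 1 = j + 2 := rfl
        rw [this] at h1
        omega

/-- the number of 321-avoiding permutations of size `N` whose first `k` entries
are increasing is the ballot number `C(N,k) = ((k+1)/(N+1)) * choose (2N-k) N`
(stated in cleared-denominator form). -/
theorem stmt5 {N k : ℕ} (hk1 : 1 ≤ k) (hkN : k ≤ N) :
    Nat.card {π : Equiv.Perm (Fin N) // Avoids321 ⇑π ∧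
        ∀ a b : Fin N, a < b → b.val < k → π a < π b} * (N + 1) =
      (k + 1) * Nat.choose (2 * N - k) N := by
  change prefixCount N k * (N + 1) = _
  obtain ⟨d, rfl⟩ := Nat.exists_eq_add_of_le hkN
  have h := prefixCount_add_choose (k + d) d k rfl
  have hc := Nat.choose_succ_right_eq (k + d + d) (k + d)
  rw [show k + d + d - (k + d) = d by omega] at hc
  rw [show 2 * (k + d) - k = k + d + d by omega]
  nlinarith [congrArg (· * (k + d + 1)) h]
end

section
/- For all 1 ≤ k ≤ N, the number of 321-avoiding permutations π of size N whose first k entries are increasing (π_1 < π_2 < ⋯ < π_k) and which satisfy π_k = N equals the binomial coefficient binom(N−1, k−1). -/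
/-- The set of values taken by `π` at its first `k` positions. -/
def prefixValues {N : ℕ} (k : ℕ) (π : Equiv.Perm (Fin N)) : Finset (Fin N) :=
  Finset.univ.filter (fun v => (π.symm v).val < k)

lemma mem_prefixValues {N k : ℕ} (π : Equiv.Perm (Fin N)) (i : Fin N) :
    π i ∈ prefixValues k π ↔ i.val < k := by
  simp [prefixValues]

lemma card_prefixValues {k l : ℕ} (π : Equiv.Perm (Fin (k + l))) :
    (prefixValues k π).card = k := by
  have h : prefixValues k π
      = (Finset.univ : Finset (Fin k)).map ((Fin.castAddEmb l).trans π.toEmbedding) := by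
    ext v
    obtain ⟨i, rfl⟩ := π.surjective v
    rw [mem_prefixValues]
    simp only [Finset.mem_map, Finset.mem_univ, true_and]
    constructor
    · intro hi
      exact ⟨⟨i, hi⟩, rfl⟩
    · rintro ⟨a, ha⟩
      have : Fin.castAdd l a = i := π.injective ha
      rw [← this]
      exact a.isLt
  rw [h]
  simp

lemma rest_increasing {N k : ℕ} (hk : k - 1 < N) (hN : N - 1 < N) (π : Equiv.Perm (Fin N))
    (h : Avoids321 ⇑π) (hmax : π ⟨k - 1, hk⟩ = ⟨N - 1, hN⟩) (a b : Fin N) (hab : a < b)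
    (ha : k ≤ a.val) (hk1 : 1 ≤ k) : π a < π b := by
  by_contra hcon
  have hne : π b ≠ π a := fun e => hab.ne' (π.injective e)
  have hna : π a ≠ π ⟨k - 1, hk⟩ := fun e => by
    have := congrArg Fin.val (π.injective e)
    simp only at this
    omega
  refine h ⟨⟨k - 1, hk⟩, a, b, ?_, hab, lt_of_le_of_ne (not_lt.mp hcon) hne,
    lt_of_le_of_ne ?_ hna⟩
  · rw [Fin.lt_def]
    simp only
    omega
  · rw [hmax, Fin.le_def]
    simp only
    omega

/-- Of three positions, two adjacent ones lie on the same side of the cut after position `k`. -/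
lemma avoids321_of_increasing {N k : ℕ} (π : Fin N → Fin N)
    (h1 : ∀ a b : Fin N, a < b → b.val < k → π a < π b)
    (h2 : ∀ a b : Fin N, a < b → k ≤ a.val → π a < π b) : Avoids321 π := by
  rintro ⟨a, b, c, hab, hbc, hcb, hba⟩
  rcases lt_or_ge b.val k with hb | hb
  · exact lt_asymm hba (h1 a b hab hb)
  · exact lt_asymm hcb (h2 b c hbc hb)

lemma card_subsets {n : ℕ} (x : Fin (n + 1)) (m : ℕ) :
    Nat.card {S : Finset (Fin (n + 1)) // S.card = m + 1 ∧ x ∈ S} = n.choose m := by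
  have h : (Finset.univ.filter (fun S : Finset (Fin (n + 1)) => S.card = m + 1 ∧ x ∈ S))
      = (Finset.powersetCard m (Finset.univ.erase x)).image (insert x) := by
    ext S
    simp only [Finset.mem_filter, Finset.mem_univ, true_and, Finset.mem_image,
      Finset.mem_powersetCard]
    constructor
    · rintro ⟨hc, hx⟩
      refine ⟨S.erase x, ⟨Finset.erase_subset_erase x (Finset.subset_univ S), ?_⟩,
        Finset.insert_erase hx⟩
      rw [Finset.card_erase_of_mem hx, hc, Nat.add_sub_cancel]
    · rintro ⟨T, ⟨hT, hc⟩, rfl⟩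
      have hx : x ∉ T := fun hx => Finset.notMem_erase x _ (hT hx)
      exact ⟨by rw [Finset.card_insert_of_notMem hx, hc], Finset.mem_insert_self x T⟩
  rw [Nat.card_eq_fintype_card, Fintype.card_subtype, h, Finset.card_image_of_injOn]
  · simp [Finset.card_powersetCard]
  · intro S hS T hT hST
    have hS' : x ∉ S := fun hx =>
      Finset.notMem_erase x _ ((Finset.mem_powersetCard.mp hS).1 hx)
    have hT' : x ∉ T := fun hx =>
      Finset.notMem_erase x _ ((Finset.mem_powersetCard.mp hT).1 hx)
    rw [← Finset.erase_insert hS', ← Finset.erase_insert hT', hST]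

/-- `π ↦ prefixValues k π` is a bijection onto the `k`-sets of values containing the maximum;
its inverse lists the set and then its complement, each in increasing order. -/
lemma card_eq_card_subsets {k l : ℕ} (hk1 : 1 ≤ k) (hk : k - 1 < k + l)
    (hN : k + l - 1 < k + l) :
    Nat.card {π : Equiv.Perm (Fin (k + l)) // Avoids321 ⇑π ∧
        (∀ a b : Fin (k + l), a < b → b.val < k → π a < π b) ∧
        π ⟨k - 1, hk⟩ = ⟨k + l - 1, hN⟩} =
      Nat.card {S : Finset (Fin (k + l)) // S.card = k ∧ (⟨k + l - 1, hN⟩ : Fin (k + l)) ∈ S} := by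
  have hcompl : ∀ S : Finset (Fin (k + l)), S.card = k → Sᶜ.card = l := by
    intro S hS
    rw [Finset.card_compl, hS, Fintype.card_fin, Nat.add_sub_cancel_left]
  refine Nat.card_eq_of_bijective (fun π => ⟨prefixValues k π.1, card_prefixValues π.1, ?_⟩)
    ⟨?_, ?_⟩
  · obtain ⟨π, -, -, hπm⟩ := π
    have h := (mem_prefixValues (k := k) π ⟨k - 1, hk⟩).mpr (by simp only; omega)
    rwa [hπm] at h
  · rintro ⟨π, hπ, hπi, hπm⟩ ⟨σ, hσ, hσi, hσm⟩ hST
    have hST : prefixValues k π = prefixValues k σ := congrArg Subtype.val hST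
    -- Each half of such a permutation is the increasing enumeration of a set fixed by its prefix.
    have key : ∀ τ : Equiv.Perm (Fin (k + l)), Avoids321 ⇑τ →
        (∀ a b : Fin (k + l), a < b → b.val < k → τ a < τ b) →
        τ ⟨k - 1, hk⟩ = ⟨k + l - 1, hN⟩ →
        ∀ (S : Finset (Fin (k + l))) (hS : S.card = k), prefixValues k τ = S →
        (fun i => τ (Fin.castAdd l i)) = S.orderEmbOfFin hS ∧
        (fun i => τ (Fin.natAdd k i)) = Sᶜ.orderEmbOfFin (hcompl S hS) := by
      rintro τ hτ hτi hτm S hS rfl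
      constructor
      · apply Finset.orderEmbOfFin_unique
        · intro i
          rw [mem_prefixValues]
          exact i.isLt
        · intro i j hij
          exact hτi _ _ (Fin.lt_def.mpr hij) j.isLt
      · apply Finset.orderEmbOfFin_unique
        · intro i
          rw [Finset.mem_compl, mem_prefixValues]
          simp
        · intro i j hij
          exact rest_increasing hk hN τ hτ hτm _ _ (by simpa using hij) (by simp) hk1
    obtain ⟨p1, p2⟩ := key π hπ hπi hπm _ (card_prefixValues σ) hST
    obtain ⟨s1, s2⟩ := key σ hσ hσi hσm _ (card_prefixValues σ) rfl
    apply Subtype.ext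
    ext1 i
    refine Fin.addCases (fun i => ?_) (fun i => ?_) i
    · exact congrFun (p1.trans s1.symm) i
    · exact congrFun (p2.trans s2.symm) i
  · rintro ⟨S, hS, hmem⟩
    let π : Equiv.Perm (Fin (k + l)) :=
      finSumFinEquiv.symm.trans (finSumEquivOfFinset hS (hcompl S hS))
    have e1 : ∀ i, π (Fin.castAdd l i) = S.orderEmbOfFin hS i := fun i => by simp [π]
    have e2 : ∀ i, π (Fin.natAdd k i) = Sᶜ.orderEmbOfFin (hcompl S hS) i := fun i => by simp [π]
    have i1 : ∀ a b : Fin (k + l), a < b → b.val < k → π a < π b := by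
      intro a b hab hb
      have := e1 ⟨a, lt_trans hab hb⟩
      have h' := e1 ⟨b, hb⟩
      simp only [Fin.castAdd_mk, Fin.eta] at this h'
      rw [this, h']
      exact (S.orderEmbOfFin hS).strictMono hab
    have i2 : ∀ a b : Fin (k + l), a < b → k ≤ a.val → π a < π b := by
      intro a b hab ha
      have hb : k ≤ b.val := ha.trans hab.le
      obtain ⟨i, rfl⟩ : ∃ i, Fin.natAdd k i = a := ⟨⟨a - k, by omega⟩, Fin.ext (by simp; omega)⟩
      obtain ⟨j, rfl⟩ : ∃ j, Fin.natAdd k j = b := ⟨⟨b - k, by omega⟩, Fin.ext (by simp; omega)⟩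
      rw [e2, e2]
      exact (Sᶜ.orderEmbOfFin (hcompl S hS)).strictMono (by simpa using hab)
    have hpre : prefixValues k π = S := by
      ext v
      obtain ⟨i, rfl⟩ := π.surjective v
      rw [mem_prefixValues]
      refine Fin.addCases (fun i => ?_) (fun i => ?_) i
      · rw [e1]
        simp
      · rw [e2]
        have := Finset.orderEmbOfFin_mem Sᶜ (hcompl S hS) i
        rw [Finset.mem_compl] at this
        simp [this]
    refine ⟨⟨π, avoids321_of_increasing π i1 i2, i1, ?_⟩, Subtype.ext hpre⟩
    -- The maximum lies in `S`, so it is the last entry of the increasing prefix.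
    obtain ⟨i, hi⟩ := π.surjective ⟨k + l - 1, hN⟩
    have hik : i.val < k := by
      rw [← mem_prefixValues π, hpre, hi]
      exact hmem
    have : i = ⟨k - 1, hk⟩ := by
      by_contra hne
      have hlt : i < ⟨k - 1, hk⟩ := by
        refine lt_of_le_of_ne ?_ hne
        rw [Fin.le_def]
        simp only
        omega
      have := i1 i _ hlt (by simp only; omega)
      rw [hi, Fin.lt_def] at this
      simp only at this
      omega
    rw [← this, hi]

/-- the number of 321-avoiding permutations of size `N` whose first `k` entries
are increasing and whose `k`-th entry is the maximum value `N` equals `choose (N-1) (k-1)`. -/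
theorem stmt6 {N k : ℕ} (hk1 : 1 ≤ k) (hkN : k ≤ N) :
    Nat.card {π : Equiv.Perm (Fin N) // Avoids321 ⇑π ∧
        (∀ a b : Fin N, a < b → b.val < k → π a < π b) ∧
        π ⟨k - 1, by omega⟩ = ⟨N - 1, by omega⟩} =
      Nat.choose (N - 1) (k - 1) := by
  obtain ⟨l, rfl⟩ := Nat.exists_eq_add_of_le hkN
  rw [card_eq_card_subsets hk1 (by omega) (by omega)]
  obtain ⟨m, rfl⟩ := Nat.exists_eq_add_of_le' hk1
  -- `card_subsets` needs the size as a syntactic successor.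
  have hsize : m + 1 + l = (m + l) + 1 := by omega
  have hmain : ∀ (M : ℕ) (hM : M = (m + l) + 1) (x : Fin M),
      Nat.card {S : Finset (Fin M) // S.card = m + 1 ∧ x ∈ S} = (m + l).choose m := by
    rintro M rfl x
    exact card_subsets x m
  rw [hmain _ hsize, hsize, Nat.add_sub_cancel, Nat.add_sub_cancel]
end

section
/- For N ≥ 11, consider the strategy on permutations of size N which stops at the first index k such that π|[k] ends in a left-to-right maximum and either N−k ≤ 1, or N−k = 2 and the number of value-saturated left-to-right maxima of π|[k] is at least 4, or N−k = 3 and the number of value-saturated left-to-right maxima of π|[k] is at least 9 (stopping at index N if no such k exists). The number of 321-avoiding permutations of size N won by this strategy equals 4·C_{N−1} − 9·C_{N−2} + 2·C_{N−4} + 105·C_{N−5} − 206·C_{N−6} + 95·C_{N−7} − 5·C_{N−8}, where C_n is the n-th Catalan number. -/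
/-- The number of value-saturated left-to-right maxima of the length-`k` prefix of `π`:
the largest `i ≤ k` such that every entry among the `i` largest values of the prefix is a
left-to-right maximum (equivalently, each of the top `i` values of the flattened prefix
occurs as a left-to-right maximum). -/
noncomputable def satCount {N : ℕ} (π : Fin N → Fin N) (k : ℕ) : ℕ :=
  sSup {i : ℕ | i ≤ k ∧ ∀ m : Fin N, m.val < k →
    (Finset.univ.filter (fun l : Fin N => l.val < k ∧ π m < π l)).card < i → IsLRMax π m}

/-- The trigger condition of the `(1,4,9)` threshold strategy at 1-indexed index `i`:
the `i`-th prefix ends in a left-to-right maximum and either `N - i ≤ 1`, or `N - i = 2` and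
the prefix has at least 4 value-saturated left-to-right maxima, or `N - i = 3` and it has at
least 9 of them. -/
def Trig149 {N : ℕ} (π : Fin N → Fin N) (i : ℕ) : Prop :=
  ∃ h1 : i - 1 < N, IsLRMax π ⟨i - 1, h1⟩ ∧
    (N - i ≤ 1 ∨ (N - i = 2 ∧ 4 ≤ satCount π i) ∨ (N - i = 3 ∧ 9 ≤ satCount π i))

/-- The `(1,4,9)` strategy wins `π`: stopping at the first index where `Trig149` holds
(at index `N` if none), the entry there is the maximum value. -/
def Wins149 {N : ℕ} (π : Fin N → Fin N) : Prop :=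
  ∃ i : ℕ, 1 ≤ i ∧ i ≤ N ∧ (Trig149 π i ∨ i = N) ∧
    (∀ j, 1 ≤ j → j < i → ¬ Trig149 π j) ∧
    ∃ h1 : i - 1 < N, π ⟨i - 1, h1⟩ = ⟨N - 1, by omega⟩

open Finset

/-! ### Appending a last entry -/

/-- The permutation of size `n + 1` obtained from `σ` by appending a last entry with exactly
`j` larger entries (0-indexed value `n - j`; meaningful for `j ≤ n`), the values of `σ` being
shifted so as to keep their relative order. -/
def appendLast {n : ℕ} (j : ℕ) (σ : Equiv.Perm (Fin n)) : Equiv.Perm (Fin (n + 1)) :=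
  (finSuccEquiv' (Fin.last n)).trans
    ((Equiv.optionCongr σ).trans (finSuccEquiv' (⟨n - j, by omega⟩ : Fin (n + 1))).symm)

lemma appendLast_last {n : ℕ} (j : ℕ) (σ : Equiv.Perm (Fin n)) :
    appendLast j σ (Fin.last n) = ⟨n - j, by omega⟩ := by
  simp [appendLast]

lemma appendLast_castSucc {n : ℕ} (j : ℕ) (σ : Equiv.Perm (Fin n)) (i : Fin n) :
    appendLast j σ i.castSucc = (⟨n - j, by omega⟩ : Fin (n + 1)).succAbove (σ i) := by
  simp [appendLast, finSuccEquiv'_last_apply_castSucc]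

lemma appendLast_castSucc_lt {n : ℕ} (j : ℕ) (σ : Equiv.Perm (Fin n)) (a b : Fin n) :
    appendLast j σ a.castSucc < appendLast j σ b.castSucc ↔ σ a < σ b := by
  simp [appendLast_castSucc, Fin.succAbove_lt_succAbove_iff]

lemma appendLast_bijective (n : ℕ) : Function.Bijective
    (fun p : Fin (n + 1) × Equiv.Perm (Fin n) => appendLast p.1.val p.2) := by
  rw [Fintype.bijective_iff_injective_and_card]
  refine ⟨?_, ?_⟩
  · rintro ⟨a, σ⟩ ⟨b, τ⟩ h
    simp only at h
    have h1 := congrArg (fun e : Equiv.Perm (Fin (n + 1)) => e (Fin.last n)) h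
    simp only [appendLast_last, Fin.mk.injEq] at h1
    have hab : a = b := by ext; omega
    subst hab
    have : σ = τ := by
      ext i
      have h2 := congrArg (fun e : Equiv.Perm (Fin (n + 1)) => e i.castSucc) h
      simp only [appendLast_castSucc, Fin.succAbove_right_inj] at h2
      rw [h2]
    rw [this]
  · simp [Fintype.card_perm, Nat.factorial_succ]

lemma isLRMax_castSucc {n : ℕ} (j : ℕ) (σ : Equiv.Perm (Fin n)) (m : Fin n) :
    IsLRMax (appendLast j σ) m.castSucc ↔ IsLRMax σ m := by
  constructor
  · intro h l hl
    exact (appendLast_castSucc_lt j σ l m).1 (h _ (by simpa using hl))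
  · intro h l hl
    induction l using Fin.lastCases with
    | last => exact absurd hl (by simp [Fin.le_last])
    | cast l => exact (appendLast_castSucc_lt j σ l m).2 (h _ (by simpa using hl))

lemma isLRMax_last {n : ℕ} {j : ℕ} (hj : j ≤ n) (σ : Equiv.Perm (Fin n)) :
    IsLRMax (appendLast j σ) (Fin.last n) ↔ j = 0 := by
  constructor
  · intro h
    by_contra hj0
    -- the entry of value `n` sits strictly before the last position
    have hp : (appendLast j σ).symm (Fin.last n) < Fin.last n := by
      rw [Fin.lt_last_iff_ne_last]
      intro h1
      have h2 := (Equiv.symm_apply_eq _).1 h1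
      rw [appendLast_last, Fin.ext_iff] at h2
      simp at h2
      omega
    have h3 := h _ hp
    rw [Equiv.apply_symm_apply] at h3
    exact absurd h3 (not_lt.2 (Fin.le_last _))
  · rintro rfl l hl
    have : appendLast 0 σ (Fin.last n) = Fin.last n := by
      rw [appendLast_last]; rfl
    rw [this, Fin.lt_last_iff_ne_last]
    intro h
    rw [← this] at h
    exact hl.ne ((appendLast 0 σ).injective h)

/-! ### Value-saturated left-to-right maxima -/

lemma le_satCount_iff {N : ℕ} (π : Fin N → Fin N) (k i : ℕ) :
    i ≤ satCount π k ↔ i ≤ k ∧ ∀ m : Fin N, m.val < k →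
      (univ.filter (fun l : Fin N => l.val < k ∧ π m < π l)).card < i → IsLRMax π m := by
  set S := {i : ℕ | i ≤ k ∧ ∀ m : Fin N, m.val < k →
    (univ.filter (fun l : Fin N => l.val < k ∧ π m < π l)).card < i → IsLRMax π m} with hS
  have hb : BddAbove S := ⟨k, fun x hx => hx.1⟩
  have h0 : S.Nonempty := ⟨0, by simp [hS]⟩
  have hmem : satCount π k ∈ S := Nat.sSup_mem h0 hb
  constructor
  · intro h
    exact ⟨h.trans hmem.1, fun m hm hc => hmem.2 m hm (hc.trans_le h)⟩
  · intro h
    exact le_csSup hb h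

/-- The saturation count of a prefix does not see an appended entry. -/
lemma satCount_appendLast {n : ℕ} (j : ℕ) (σ : Equiv.Perm (Fin n)) {k : ℕ} (hk : k ≤ n) :
    satCount (appendLast j σ) k = satCount σ k := by
  have hcard : ∀ m : Fin n,
      (univ.filter (fun l : Fin (n + 1) => l.val < k ∧
        appendLast j σ m.castSucc < appendLast j σ l)).card =
      (univ.filter (fun l : Fin n => l.val < k ∧ σ m < σ l)).card := by
    intro m
    refine Eq.trans (congrArg Finset.card ?_) (Finset.card_map Fin.castSuccEmb)
    ext l
    induction l using Fin.lastCases with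
    | last => simp; intro h; omega
    | cast l => simp [appendLast_castSucc_lt]
  refine eq_of_forall_le_iff fun i => ?_
  rw [le_satCount_iff, le_satCount_iff]
  refine and_congr_right fun _ => ?_
  constructor
  · intro h m hm hc
    exact (isLRMax_castSucc j σ m).1 (h m.castSucc hm (by rwa [hcard]))
  · intro h m hm hc
    induction m using Fin.lastCases with
    | last => simp at hm; omega
    | cast m =>
      rw [hcard] at hc
      exact (isLRMax_castSucc j σ m).2 (h m hm hc)

/-- For the whole permutation, the number of entries above `σ m` is `n - 1 - σ m`. -/
lemma le_satCount_full {n : ℕ} (σ : Equiv.Perm (Fin n)) (i : ℕ) :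
    i ≤ satCount σ n ↔ i ≤ n ∧ ∀ m : Fin n, n < i + 1 + (σ m).val → IsLRMax σ m := by
  rw [le_satCount_iff]
  refine and_congr_right fun _ => forall_congr' fun m => ?_
  have : (univ.filter (fun l : Fin n => l.val < n ∧ σ m < σ l)).card = n - 1 - (σ m).val := by
    rw [← Fin.card_Ioi, ← Finset.card_map σ.toEmbedding]
    congr 1
    ext l
    simp [Finset.mem_map_equiv]
  rw [this]
  have := (σ m).isLt
  simp only [m.isLt, true_imp_iff]
  constructor <;> intro h h' <;> exact h (by omega)

lemma succAbove_val {n : ℕ} (v : Fin (n + 1)) (x : Fin n) :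
    (v.succAbove x).val = if x.val < v.val then x.val else x.val + 1 := by
  by_cases h : x.val < v.val
  · rw [Fin.succAbove_of_castSucc_lt _ _ (by simpa [Fin.lt_def] using h)]; simp [h]
  · rw [Fin.succAbove_of_le_castSucc _ _ (by simpa [Fin.le_def] using h)]; simp [h]

/-- A new last entry creates a 321 pattern exactly when it lies below an entry that is not a
left-to-right maximum, so it may be placed below at most `satCount` entries. -/
lemma avoids321_appendLast {n : ℕ} {j : ℕ} (hj : j ≤ n) (σ : Equiv.Perm (Fin n)) :
    Avoids321 (appendLast j σ) ↔ Avoids321 σ ∧ j ≤ satCount σ n := by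
  rw [le_satCount_full]
  constructor
  · intro h
    refine ⟨?_, hj, ?_⟩
    · rintro ⟨a, b, c, hab, hbc, h1, h2⟩
      exact h ⟨a.castSucc, b.castSucc, c.castSucc, by simpa using hab, by simpa using hbc,
        (appendLast_castSucc_lt ..).2 h1, (appendLast_castSucc_lt ..).2 h2⟩
    · intro m hm l hl
      by_contra hlt
      have hne : σ l ≠ σ m := fun e => hl.ne (σ.injective e)
      have hlt' : σ m < σ l := lt_of_le_of_ne (not_lt.1 hlt) hne.symm
      refine h ⟨l.castSucc, m.castSucc, Fin.last n, by simpa using hl, Fin.castSucc_lt_last m, ?_,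
        (appendLast_castSucc_lt ..).2 hlt'⟩
      rw [appendLast_last, appendLast_castSucc, Fin.lt_def, succAbove_val]
      simp only
      split_ifs <;> omega
  · rintro ⟨hav, -, hs⟩ ⟨a, b, c, hab, hbc, h1, h2⟩
    have hb := hbc.trans_le (Fin.le_last c)
    have ha := hab.trans hb
    obtain ⟨a, rfl⟩ := Fin.exists_castSucc_eq.2 ha.ne
    obtain ⟨b, rfl⟩ := Fin.exists_castSucc_eq.2 hb.ne
    rw [appendLast_castSucc_lt] at h2
    have hab' : a < b := by simpa using hab
    induction c using Fin.lastCases with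
    | last =>
      rw [appendLast_last, appendLast_castSucc, Fin.lt_def, succAbove_val] at h1
      simp only at h1
      have := hs b (by split_ifs at h1 <;> omega) a hab'
      exact absurd this (not_lt.2 h2.le)
    | cast c =>
      exact hav ⟨a, b, c, hab', by simpa using hbc, (appendLast_castSucc_lt ..).1 h1, h2⟩

/-- The transition of the saturation count when an entry with `j` larger entries is appended. -/
def nextSat (s j : ℕ) : ℕ := if j = 0 then s + 1 else j

lemma satCount_appendLast_full {n : ℕ} {j : ℕ} (σ : Equiv.Perm (Fin n))
    (hj : j ≤ satCount σ n) :
    satCount (appendLast j σ) (n + 1) = nextSat (satCount σ n) j := by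
  have hjn : j ≤ n := ((le_satCount_full σ j).1 hj).1
  refine eq_of_forall_le_iff fun i => ?_
  rw [le_satCount_full]
  have hval : ∀ m : Fin n, (appendLast j σ m.castSucc).val =
      if (σ m).val < n - j then (σ m).val else (σ m).val + 1 := fun m => by
    rw [appendLast_castSucc, succAbove_val]
  have hsplit : (∀ m : Fin (n + 1), n + 1 < i + 1 + (appendLast j σ m).val →
        IsLRMax (appendLast j σ) m) ↔
      (∀ m : Fin n, n + 1 < i + 1 + (appendLast j σ m.castSucc).val → IsLRMax σ m) ∧
        (n + 1 < i + 1 + (n - j) → j = 0) := by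
    rw [Fin.forall_fin_succ']
    simp only [isLRMax_castSucc, isLRMax_last hjn, appendLast_last]
  rw [hsplit]
  simp only [hval]
  rcases Nat.eq_zero_or_pos j with rfl | hpos
  · have : ∀ m : Fin n, (σ m).val < n - 0 := fun m => (σ m).isLt
    simp only [this, if_true, nextSat]
    rcases i with _ | i
    · simp only [zero_le, true_and, iff_true]
      refine ⟨fun m h => ?_, fun _ => trivial⟩
      have := (σ m).isLt
      omega
    · rw [Nat.add_le_add_iff_right, Nat.add_le_add_iff_right, le_satCount_full]
      constructor
      · rintro ⟨h, h', -⟩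
        exact ⟨h, fun m hm => h' m (by omega)⟩
      · rintro ⟨h, h'⟩
        exact ⟨h, fun m hm => h' m (by omega), fun _ => trivial⟩
  · have hs := ((le_satCount_full σ j).1 hj).2
    simp only [nextSat, hpos.ne', if_false]
    constructor
    · rintro ⟨-, -, h⟩
      by_contra hlt
      exact h (by omega)
    · intro h
      refine ⟨by omega, fun m hm => hs m ?_, fun h' => by omega⟩
      have := (σ m).isLt
      split_ifs at hm <;> omega

/-! ### Summing along the generating tree -/

open Classical in
lemma sum_avoiders_succ {n : ℕ} (Φ : Equiv.Perm (Fin (n + 1)) → ℤ) :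
    ∑ π : Equiv.Perm (Fin (n + 1)), (if Avoids321 π then Φ π else 0) =
      ∑ σ : Equiv.Perm (Fin n), if Avoids321 σ then
        ∑ j ∈ range (satCount σ n + 1), Φ (appendLast j σ) else 0 := by
  rw [← (appendLast_bijective n).sum_comp, Fintype.sum_prod_type_right]
  refine sum_congr rfl fun σ _ => ?_
  have h1 : ∀ j : Fin (n + 1), (if Avoids321 (appendLast j.val σ) then Φ (appendLast j.val σ)
      else 0) = if Avoids321 σ ∧ j.val ≤ satCount σ n then Φ (appendLast j.val σ) else 0 :=
    fun j => by simp only [avoids321_appendLast (Nat.le_of_lt_succ j.isLt)]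
  simp only [h1]
  split_ifs with hσ
  · simp only [hσ, true_and]
    rw [Fin.sum_univ_eq_sum_range
      (fun j => if j ≤ satCount σ n then Φ (appendLast j σ) else 0) (n + 1), ← sum_filter]
    congr 1
    ext j
    have := ((le_satCount_full σ _).1 le_rfl).1
    simp only [mem_filter, mem_range]
    omega
  · simp [hσ]

open Classical in
/-- The sum of `f (satCount σ)` over the 321-avoiding permutations of size `n`. -/
noncomputable def satSum (n : ℕ) (f : ℕ → ℤ) : ℤ :=
  ∑ σ : Equiv.Perm (Fin n), if Avoids321 σ then f (satCount σ n) else 0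

/-- The transfer operator of the generating tree: the sum of `f` over the children of `s`. -/
def childSum (f : ℕ → ℤ) (s : ℕ) : ℤ := ∑ j ∈ range (s + 1), f (nextSat s j)

lemma childSum_eq (f : ℕ → ℤ) (s : ℕ) :
    childSum f s = f (s + 1) + ∑ j ∈ range s, f (j + 1) := by
  rw [childSum, sum_range_succ', add_comm]
  simp [nextSat]

lemma satSum_succ (n : ℕ) (f : ℕ → ℤ) : satSum (n + 1) f = satSum n (childSum f) := by
  rw [satSum, sum_avoiders_succ fun π => f (satCount π (n + 1)), satSum]
  refine sum_congr rfl fun σ _ => ?_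
  split_ifs
  · refine sum_congr rfl fun j hj => ?_
    rw [satCount_appendLast_full σ (Nat.le_of_lt_succ (mem_range.1 hj))]
  · rfl

lemma satSum_zero (f : ℕ → ℤ) : satSum 0 f = f 0 := by
  have h : ∀ σ : Equiv.Perm (Fin 0), satCount σ 0 = 0 := fun σ =>
    Nat.le_zero.1 ((le_satCount_full σ _).1 le_rfl).1
  have h' : ∀ σ : Equiv.Perm (Fin 0), Avoids321 σ := fun σ ⟨a, _⟩ => a.elim0
  simp [satSum, h, h']

lemma satSum_add (n : ℕ) (f g : ℕ → ℤ) :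
    satSum n (fun s => f s + g s) = satSum n f + satSum n g := by
  simp only [satSum, ← sum_add_distrib]
  refine sum_congr rfl fun σ _ => ?_
  split_ifs <;> simp

lemma satSum_const_mul (n : ℕ) (c : ℤ) (f : ℕ → ℤ) :
    satSum n (fun s => c * f s) = c * satSum n f := by
  simp only [satSum, mul_sum]
  refine sum_congr rfl fun σ _ => ?_
  split_ifs <;> simp

/-- The number of `m`-step continuations in the generating tree from saturation count `s`. -/
def contCount (m : ℕ) : ℕ → ℤ := childSum^[m] fun _ => 1

lemma contCount_succ (m s : ℕ) : contCount (m + 1) s = childSum (contCount m) s := by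
  rw [contCount, Function.iterate_succ_apply']; rfl

lemma contCount_succ_zero (m : ℕ) : contCount (m + 1) 0 = contCount m 1 := by
  rw [contCount_succ, childSum_eq]; simp

lemma contCount_succ_succ (m s : ℕ) :
    contCount (m + 1) (s + 1) = contCount (m + 1) s + contCount m (s + 2) := by
  rw [contCount_succ, contCount_succ, childSum_eq, childSum_eq, sum_range_succ]; ring

/-- Ballot-number formula for the number of continuations. -/
lemma contCount_formula (m : ℕ) : ∀ s : ℕ, contCount (m + 1) s =
    (Nat.choose (2 * m + 2 + s) (m + 1) : ℤ) - Nat.choose (2 * m + 2 + s) m := by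
  induction m with
  | zero =>
    intro s
    simp [contCount, childSum_eq]
    ring
  | succ m ih =>
    intro s
    induction s with
    | zero =>
      rw [contCount_succ_zero, ih]
      have e : 2 * (m + 1) + 2 + 0 = (2 * m + 2 + 1) + 1 := by ring
      rw [e, Nat.choose_succ_succ (2 * m + 2 + 1) (m + 1), Nat.choose_succ_succ (2 * m + 2 + 1) m]
      have := Nat.choose_symm_of_eq_add (show 2 * m + 2 + 1 = (m + 1 + 1) + (m + 1) by ring)
      rw [this]
      push_cast
      ring
    | succ s ihs =>
      rw [contCount_succ_succ, ihs, ih]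
      have e : 2 * (m + 1) + 2 + (s + 1) = (2 * (m + 1) + 2 + s) + 1 := by ring
      have e' : 2 * m + 2 + (s + 2) = 2 * (m + 1) + 2 + s := by ring
      rw [e, e', Nat.choose_succ_succ _ (m + 1), Nat.choose_succ_succ _ m]
      push_cast
      ring

lemma contCount_zero_eq_catalan (m : ℕ) : contCount m 0 = catalan m := by
  rcases m with _ | m
  · simp [contCount]
  · rw [contCount_formula]
    have h1 := succ_mul_catalan_eq_centralBinom (m + 1)
    rw [Nat.centralBinom_eq_two_mul_choose] at h1
    have h2 := Nat.choose_succ_right_eq (2 * (m + 1)) m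
    have e : 2 * m + 2 + 0 = 2 * (m + 1) := by ring
    have e' : 2 * (m + 1) - m = m + 2 := by omega
    rw [e'] at h2
    rw [e]
    zify at h1 h2
    have h3 : ((m : ℤ) + 2) ≠ 0 := by positivity
    apply mul_left_cancel₀ h3
    linear_combination h2 - h1

lemma satSum_iterate (n : ℕ) : ∀ f, satSum n f = (childSum^[n] f) 0 := by
  induction n with
  | zero => exact satSum_zero
  | succ n ih => intro f; rw [satSum_succ, ih, Function.iterate_succ_apply]

lemma satSum_contCount (n m : ℕ) : satSum n (contCount m) = catalan (n + m) := by
  rw [satSum_iterate, ← contCount_zero_eq_catalan, contCount, contCount, Function.iterate_add_apply]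

/-- The number of 321-avoiding permutations of size `n` with saturation count `k`. -/
noncomputable def satNum (n k : ℕ) : ℤ := satSum n fun s => if s = k then 1 else 0

lemma satNum_succ_zero (n : ℕ) : satNum (n + 1) 0 = 0 := by
  rw [satNum, satSum_succ]
  have : childSum (fun s => if s = 0 then 1 else 0) = fun _ => 0 := by
    funext s; simp [childSum_eq]
  rw [this]
  simp [satSum]

lemma satNum_succ_one (n : ℕ) : satNum (n + 1) 1 = catalan n := by
  rw [satNum, satSum_succ, ← Nat.add_zero n, ← satSum_contCount]
  congr 1
  funext s
  rcases s with _ | s <;> simp [childSum_eq, contCount]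

lemma satNum_succ_succ (n k : ℕ) :
    satNum (n + 1) (k + 2) = satNum (n + 1) (k + 1) - satNum n k := by
  have : satNum (n + 1) (k + 1) = satNum (n + 1) (k + 2) + satNum n k := by
    rw [satNum, satNum, satNum, satSum_succ, satSum_succ, ← satSum_add]
    congr 1
    funext s
    simp only [childSum_eq, Nat.add_right_cancel_iff, Finset.sum_ite_eq', mem_range]
    split_ifs <;> omega
  omega

/-! ### The winning condition -/

/-- The maximum sits at the last left-to-right maximum. -/
lemma eq_max_iff {n : ℕ} (π : Equiv.Perm (Fin (n + 1))) (p : Fin (n + 1)) :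
    π p = Fin.last n ↔ IsLRMax π p ∧ ∀ q, p < q → ¬ IsLRMax π q := by
  have key : ∀ q, π q = Fin.last n → IsLRMax π q := fun q hq l hl => by
    rw [hq, Fin.lt_last_iff_ne_last, ← hq]
    exact fun e => hl.ne (π.injective e)
  constructor
  · intro h
    refine ⟨key p h, fun q hq hL => ?_⟩
    have := hL p hq
    rw [h] at this
    exact absurd this (not_lt.2 (Fin.le_last _))
  · rintro ⟨h1, h2⟩
    have h3 : π (π.symm (Fin.last n)) = Fin.last n := π.apply_symm_apply _
    rcases lt_trichotomy p (π.symm (Fin.last n)) with h | h | h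
    · exact absurd (key _ h3) (h2 _ h)
    · rw [h, h3]
    · have := h1 _ h
      rw [h3] at this
      exact absurd this (not_lt.2 (Fin.le_last _))

/-- Winning in terms of which of the last four positions carry left-to-right maxima:
the first position that triggers must be the last left-to-right maximum. -/
lemma wins149_iff {n : ℕ} (π : Equiv.Perm (Fin (n + 4))) {L1 L2 L3 L4 : Prop}
    (h1 : IsLRMax π ⟨n, by omega⟩ ↔ L1) (h2 : IsLRMax π ⟨n + 1, by omega⟩ ↔ L2)
    (h3 : IsLRMax π ⟨n + 2, by omega⟩ ↔ L3) (h4 : IsLRMax π ⟨n + 3, by omega⟩ ↔ L4) :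
    Wins149 π ↔
      ((L1 ∧ 9 ≤ satCount π (n + 1)) ∧ ¬ L2 ∧ ¬ L3 ∧ ¬ L4) ∨
      (¬ (L1 ∧ 9 ≤ satCount π (n + 1)) ∧ (L2 ∧ 4 ≤ satCount π (n + 2)) ∧ ¬ L3 ∧ ¬ L4) ∨
      (¬ (L1 ∧ 9 ≤ satCount π (n + 1)) ∧ ¬ (L2 ∧ 4 ≤ satCount π (n + 2)) ∧ L3 ∧ ¬ L4) ∨
      (¬ (L1 ∧ 9 ≤ satCount π (n + 1)) ∧ ¬ (L2 ∧ 4 ≤ satCount π (n + 2)) ∧ ¬ L3 ∧ L4) := by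
  have t1 : Trig149 π (n + 1) ↔ L1 ∧ 9 ≤ satCount π (n + 1) := by
    rw [← h1]
    constructor
    · rintro ⟨_, h, h'⟩; exact ⟨h, by omega⟩
    · rintro ⟨h, h'⟩; exact ⟨by omega, h, by omega⟩
  have t2 : Trig149 π (n + 2) ↔ L2 ∧ 4 ≤ satCount π (n + 2) := by
    rw [← h2]
    constructor
    · rintro ⟨_, h, h'⟩; exact ⟨h, by omega⟩
    · rintro ⟨h, h'⟩; exact ⟨by omega, h, by omega⟩
  have t3 : Trig149 π (n + 3) ↔ L3 := by
    rw [← h3]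
    constructor
    · rintro ⟨_, h, h'⟩; exact h
    · rintro h; exact ⟨by omega, h, by omega⟩
  have t4 : Trig149 π (n + 4) ↔ L4 := by
    rw [← h4]
    constructor
    · rintro ⟨_, h, h'⟩; exact h
    · rintro h; exact ⟨by omega, h, by omega⟩
  have t0 : ∀ j, j ≤ n → ¬ Trig149 π j := by
    rintro j hj ⟨_, _, h⟩; omega
  have m4 : π ⟨n + 3, by omega⟩ = Fin.last (n + 3) ↔ L4 := by
    rw [eq_max_iff, ← h4]
    exact ⟨fun h => h.1, fun h => ⟨h, fun q hq => by rw [Fin.lt_def] at hq; simp at hq; omega⟩⟩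
  have m3 : π ⟨n + 2, by omega⟩ = Fin.last (n + 3) ↔ L3 ∧ ¬ L4 := by
    rw [eq_max_iff, ← h4, ← h3]
    refine and_congr_right fun _ => ⟨fun h => h _ (by simp [Fin.lt_def]), fun h q hq => ?_⟩
    rw [Fin.lt_def] at hq
    have : q = ⟨n + 3, by omega⟩ := by ext; simp at hq ⊢; omega
    rwa [this]
  have m2 : π ⟨n + 1, by omega⟩ = Fin.last (n + 3) ↔ L2 ∧ ¬ L3 ∧ ¬ L4 := by
    rw [eq_max_iff, ← h4, ← h3, ← h2]
    refine and_congr_right fun _ => ⟨fun h => ⟨h _ (by simp [Fin.lt_def]),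
      h _ (by simp [Fin.lt_def])⟩, fun h q hq => ?_⟩
    rw [Fin.lt_def] at hq
    have : q = ⟨n + 2, by omega⟩ ∨ q = ⟨n + 3, by omega⟩ := by
      simp only [Fin.ext_iff] at hq ⊢; omega
    rcases this with e | e <;> rw [e]
    exacts [h.1, h.2]
  have m1 : π ⟨n, by omega⟩ = Fin.last (n + 3) ↔ L1 ∧ ¬ L2 ∧ ¬ L3 ∧ ¬ L4 := by
    rw [eq_max_iff, ← h4, ← h3, ← h2, ← h1]
    refine and_congr_right fun _ => ⟨fun h => ⟨h _ (by simp [Fin.lt_def]),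
      h _ (by simp [Fin.lt_def]), h _ (by simp [Fin.lt_def])⟩, fun h q hq => ?_⟩
    rw [Fin.lt_def] at hq
    have : q = ⟨n + 1, by omega⟩ ∨ q = ⟨n + 2, by omega⟩ ∨ q = ⟨n + 3, by omega⟩ := by
      simp only [Fin.ext_iff] at hq ⊢; omega
    rcases this with e | e | e <;> rw [e]
    exacts [h.1, h.2.1, h.2.2]
  constructor
  · rintro ⟨i, hi1, hiN, hT, hno, hlt, hmax⟩
    have hmax' : π ⟨i - 1, hlt⟩ = Fin.last (n + 3) := hmax
    have hi : i = n + 1 ∨ i = n + 2 ∨ i = n + 3 ∨ i = n + 4 := by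
      by_contra hc
      rcases hT with hT | hT
      · exact t0 i (by omega) hT
      · omega
    rcases hi with rfl | rfl | rfl | rfl
    · exact Or.inl ⟨t1.1 (hT.resolve_right (by omega)), (m1.1 hmax').2⟩
    · exact Or.inr (Or.inl ⟨t1.not.1 (hno (n + 1) (by omega) (by omega)),
        t2.1 (hT.resolve_right (by omega)), (m2.1 hmax').2⟩)
    · exact Or.inr (Or.inr (Or.inl ⟨t1.not.1 (hno (n + 1) (by omega) (by omega)),
        t2.not.1 (hno (n + 2) (by omega) (by omega)), m3.1 hmax'⟩))
    · exact Or.inr (Or.inr (Or.inr ⟨t1.not.1 (hno (n + 1) (by omega) (by omega)),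
        t2.not.1 (hno (n + 2) (by omega) (by omega)),
        t3.not.1 (hno (n + 3) (by omega) (by omega)), m4.1 hmax'⟩))
  · have hsplit : ∀ j, 1 ≤ j → j ≤ n ∨ j = n + 1 ∨ j = n + 2 ∨ j = n + 3 ∨ n + 4 ≤ j := by
      intro j _; omega
    rintro (h | h | h | h)
    · refine ⟨n + 1, by omega, by omega, Or.inl (t1.2 h.1), fun j hj hj' => ?_, by omega,
        m1.2 ⟨h.1.1, h.2⟩⟩
      exact t0 j (by omega)
    · refine ⟨n + 2, by omega, by omega, Or.inl (t2.2 h.2.1), fun j hj hj' => ?_, by omega,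
        m2.2 ⟨h.2.1.1, h.2.2⟩⟩
      rcases hsplit j hj with hc | rfl | rfl | rfl | hc
      exacts [t0 j hc, t1.not.2 h.1, by omega, by omega, by omega]
    · refine ⟨n + 3, by omega, by omega, Or.inl (t3.2 h.2.2.1), fun j hj hj' => ?_, by omega,
        m3.2 h.2.2⟩
      rcases hsplit j hj with hc | rfl | rfl | rfl | hc
      exacts [t0 j hc, t1.not.2 h.1, t2.not.2 h.2.1, by omega, by omega]
    · refine ⟨n + 4, by omega, by omega, Or.inl (t4.2 h.2.2.2), fun j hj hj' => ?_, by omega,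
        m4.2 h.2.2.2⟩
      rcases hsplit j hj with hc | rfl | rfl | rfl | hc
      exacts [t0 j hc, t1.not.2 h.1, t2.not.2 h.2.1, t3.not.2 h.2.2.1, by omega]

/-- The winning condition read off the saturation count `s` at size `N - 4` and the last four
insertion labels: label `0` means that the appended entry is a left-to-right maximum. -/
def WinCode (s j₁ j₂ j₃ j₄ : ℕ) : Prop :=
  ((j₁ = 0 ∧ 8 ≤ s) ∧ j₂ ≠ 0 ∧ j₃ ≠ 0 ∧ j₄ ≠ 0) ∨
  (¬ (j₁ = 0 ∧ 8 ≤ s) ∧ (j₂ = 0 ∧ 3 ≤ nextSat s j₁) ∧ j₃ ≠ 0 ∧ j₄ ≠ 0) ∨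
  (¬ (j₁ = 0 ∧ 8 ≤ s) ∧ ¬ (j₂ = 0 ∧ 3 ≤ nextSat s j₁) ∧ j₃ = 0 ∧ j₄ ≠ 0) ∨
  (¬ (j₁ = 0 ∧ 8 ≤ s) ∧ ¬ (j₂ = 0 ∧ 3 ≤ nextSat s j₁) ∧ j₃ ≠ 0 ∧ j₄ = 0)

instance (s j₁ j₂ j₃ j₄ : ℕ) : Decidable (WinCode s j₁ j₂ j₃ j₄) := by
  unfold WinCode; infer_instance

lemma wins149_appendLast {n : ℕ} (σ : Equiv.Perm (Fin n)) (j₁ j₂ j₃ j₄ : ℕ)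
    (h₁ : j₁ ≤ satCount σ n) (h₂ : j₂ ≤ satCount (appendLast j₁ σ) (n + 1))
    (h₃ : j₃ ≤ satCount (appendLast j₂ (appendLast j₁ σ)) (n + 2))
    (h₄ : j₄ ≤ satCount (appendLast j₃ (appendLast j₂ (appendLast j₁ σ))) (n + 3)) :
    Wins149 (appendLast j₄ (appendLast j₃ (appendLast j₂ (appendLast j₁ σ)))) ↔
      WinCode (satCount σ n) j₁ j₂ j₃ j₄ := by
  have b₁ := ((le_satCount_full _ _).1 h₁).1
  have b₂ := ((le_satCount_full _ _).1 h₂).1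
  have b₃ := ((le_satCount_full _ _).1 h₃).1
  have b₄ := ((le_satCount_full _ _).1 h₄).1
  set σ₁ := appendLast j₁ σ with hσ₁
  set σ₂ := appendLast j₂ σ₁ with hσ₂
  set σ₃ := appendLast j₃ σ₂ with hσ₃
  have l4 : IsLRMax (appendLast j₄ σ₃) ⟨n + 3, by omega⟩ ↔ j₄ = 0 := isLRMax_last b₄ σ₃
  have l3 : IsLRMax (appendLast j₄ σ₃) ⟨n + 2, by omega⟩ ↔ j₃ = 0 :=
    (isLRMax_castSucc j₄ σ₃ ⟨n + 2, by omega⟩).trans (isLRMax_last b₃ σ₂)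
  have l2 : IsLRMax (appendLast j₄ σ₃) ⟨n + 1, by omega⟩ ↔ j₂ = 0 :=
    (isLRMax_castSucc j₄ σ₃ ⟨n + 1, by omega⟩).trans
      ((isLRMax_castSucc j₃ σ₂ ⟨n + 1, by omega⟩).trans (isLRMax_last b₂ σ₁))
  have l1 : IsLRMax (appendLast j₄ σ₃) ⟨n, by omega⟩ ↔ j₁ = 0 :=
    (isLRMax_castSucc j₄ σ₃ ⟨n, by omega⟩).trans
      ((isLRMax_castSucc j₃ σ₂ ⟨n, by omega⟩).trans
        ((isLRMax_castSucc j₂ σ₁ ⟨n, by omega⟩).trans (isLRMax_last b₁ σ)))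
  have s1 : satCount (appendLast j₄ σ₃) (n + 1) = nextSat (satCount σ n) j₁ := by
    rw [satCount_appendLast _ _ (by omega), satCount_appendLast _ _ (by omega),
      satCount_appendLast _ _ (by omega), satCount_appendLast_full σ h₁]
  have s2 : satCount (appendLast j₄ σ₃) (n + 2) = nextSat (nextSat (satCount σ n) j₁) j₂ := by
    rw [satCount_appendLast _ _ (by omega), satCount_appendLast _ _ (by omega),
      satCount_appendLast_full σ₁ h₂, satCount_appendLast_full σ h₁]
  rw [wins149_iff _ l1 l2 l3 l4, s1, s2]
  have e1 : (j₁ = 0 ∧ 9 ≤ nextSat (satCount σ n) j₁) ↔ (j₁ = 0 ∧ 8 ≤ satCount σ n) := by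
    refine and_congr_right fun h => ?_
    simp only [nextSat, h, if_true]; omega
  have e2 : (j₂ = 0 ∧ 4 ≤ nextSat (nextSat (satCount σ n) j₁) j₂) ↔
      (j₂ = 0 ∧ 3 ≤ nextSat (satCount σ n) j₁) := by
    refine and_congr_right fun h => ?_
    rw [nextSat, if_pos h]; omega
  rw [e1, e2]
  rfl

/-- The number of winning four-step continuations from saturation count `s`. -/
def winCount (s : ℕ) : ℤ :=
  ∑ j₁ ∈ range (s + 1), ∑ j₂ ∈ range (nextSat s j₁ + 1),
    ∑ j₃ ∈ range (nextSat (nextSat s j₁) j₂ + 1),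
      ∑ j₄ ∈ range (nextSat (nextSat (nextSat s j₁) j₂) j₃ + 1),
        if WinCode s j₁ j₂ j₃ j₄ then 1 else 0

open Classical in
lemma card_wins (n : ℕ) :
    (Nat.card {π : Equiv.Perm (Fin (n + 4)) // Avoids321 ⇑π ∧ Wins149 ⇑π} : ℤ) =
      satSum n winCount := by
  have h : (Nat.card {π : Equiv.Perm (Fin (n + 4)) // Avoids321 ⇑π ∧ Wins149 ⇑π} : ℤ) =
      ∑ π : Equiv.Perm (Fin (n + 4)), if Avoids321 π then (if Wins149 π then 1 else 0) else 0 := by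
    rw [Nat.card_eq_fintype_card, Fintype.card_subtype, Finset.card_filter]
    push_cast
    refine sum_congr rfl fun π _ => ?_
    split_ifs <;> tauto
  rw [h, sum_avoiders_succ, sum_avoiders_succ, sum_avoiders_succ, sum_avoiders_succ, satSum]
  refine sum_congr rfl fun σ _ => ?_
  split_ifs with hσ
  swap
  · rfl
  rw [winCount]
  refine sum_congr rfl fun j₁ hj₁ => ?_
  have h₁ := Nat.le_of_lt_succ (mem_range.1 hj₁)
  rw [← satCount_appendLast_full σ h₁]
  refine sum_congr rfl fun j₂ hj₂ => ?_
  have h₂ := Nat.le_of_lt_succ (mem_range.1 hj₂)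
  rw [← satCount_appendLast_full _ h₂]
  refine sum_congr rfl fun j₃ hj₃ => ?_
  have h₃ := Nat.le_of_lt_succ (mem_range.1 hj₃)
  rw [← satCount_appendLast_full _ h₃]
  refine sum_congr rfl fun j₄ hj₄ => ?_
  have h₄ := Nat.le_of_lt_succ (mem_range.1 hj₄)
  simp only [wins149_appendLast σ j₁ j₂ j₃ j₄ h₁ h₂ h₃ h₄]

/-! ### Evaluation of the continuation count -/

lemma sum_ne_zero (t : ℕ) : (∑ j ∈ range (t + 1), if j ≠ 0 then (1 : ℤ) else 0) = t := by
  simp only [sum_range_succ']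
  simp

/-- Continuations by two labels, exactly one of which is zero. -/
lemma sum_one_zero (t : ℕ) :
    (∑ j₃ ∈ range (t + 1), ∑ j₄ ∈ range (nextSat t j₃ + 1),
      if (j₃ = 0 ∧ j₄ ≠ 0) ∨ (j₃ ≠ 0 ∧ j₄ = 0) then (1 : ℤ) else 0) = 2 * t + 1 := by
  rw [sum_range_succ']
  have h : ∑ j₄ ∈ range (nextSat t 0 + 1),
      (if (0 = 0 ∧ j₄ ≠ 0) ∨ (0 ≠ 0 ∧ j₄ = 0) then (1 : ℤ) else 0) = t + 1 := by
    simpa [nextSat] using sum_ne_zero (t + 1)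
  rw [h]
  simp [nextSat]
  ring

/-- Continuations by two nonzero labels. -/
lemma sum_no_zero (t : ℕ) :
    2 * (∑ j₃ ∈ range (t + 1), ∑ j₄ ∈ range (nextSat t j₃ + 1),
      if j₃ ≠ 0 ∧ j₄ ≠ 0 then (1 : ℤ) else 0) = t * (t + 1) := by
  rw [sum_range_succ']
  have h : ∀ j, ∑ j₄ ∈ range (nextSat t (j + 1) + 1),
      (if j + 1 ≠ 0 ∧ j₄ ≠ 0 then (1 : ℤ) else 0) = j + 1 := fun j => by
    simpa [nextSat] using sum_ne_zero (j + 1)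
  simp only [h, ne_eq, not_true_eq_false, false_and, if_false, sum_const_zero, add_zero]
  clear h
  induction t with
  | zero => simp
  | succ t ih => rw [sum_range_succ, mul_add, ih]; push_cast; ring

/-- The number of winning three-step continuations from saturation count `t` at size `N - 3`
when the strategy has not stopped yet. -/
def winCount3 (t : ℕ) : ℤ :=
  ∑ j₂ ∈ range (t + 1), ∑ j₃ ∈ range (nextSat t j₂ + 1),
    ∑ j₄ ∈ range (nextSat (nextSat t j₂) j₃ + 1),
      if ((j₂ = 0 ∧ 3 ≤ t) ∧ j₃ ≠ 0 ∧ j₄ ≠ 0) ∨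
        (¬ (j₂ = 0 ∧ 3 ≤ t) ∧ ((j₃ = 0 ∧ j₄ ≠ 0) ∨ (j₃ ≠ 0 ∧ j₄ = 0))) then 1 else 0

lemma sum_two_mul_add (t : ℕ) :
    ∑ j ∈ range t, (2 * ((j + 1 : ℕ) : ℤ) + 1) = (t : ℤ) * (t + 2) := by
  induction t with
  | zero => simp
  | succ t ih => rw [sum_range_succ, ih]; push_cast; ring

lemma winCount3_small {t : ℕ} (ht : t < 3) : winCount3 t = (t : ℤ) * (t + 2) + 2 * t + 3 := by
  have h : ¬ 3 ≤ t := by omega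
  rw [winCount3, sum_range_succ']
  simp only [h, and_false, false_and, false_or, not_false_eq_true, true_and, sum_one_zero]
  simp only [nextSat, Nat.add_eq_zero_iff, one_ne_zero, and_false, if_false, if_true,
    sum_two_mul_add]
  push_cast
  ring

lemma winCount3_large {t : ℕ} (ht : 3 ≤ t) :
    2 * winCount3 t = 2 * ((t : ℤ) * (t + 2)) + (t + 1) * (t + 2) := by
  rw [winCount3, sum_range_succ']
  simp only [ht, and_true, Nat.add_eq_zero_iff, one_ne_zero, and_false, false_and, false_or,
    not_false_eq_true, true_and, sum_one_zero, not_true_eq_false, or_false]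
  rw [mul_add, sum_no_zero]
  simp only [nextSat, Nat.add_eq_zero_iff, one_ne_zero, and_false, if_false, if_true,
    sum_two_mul_add]
  push_cast
  ring

lemma winCode_of_not {s j₁ : ℕ} (h : ¬ (j₁ = 0 ∧ 8 ≤ s)) (j₂ j₃ j₄ : ℕ) :
    WinCode s j₁ j₂ j₃ j₄ ↔ ((j₂ = 0 ∧ 3 ≤ nextSat s j₁) ∧ j₃ ≠ 0 ∧ j₄ ≠ 0) ∨
      (¬ (j₂ = 0 ∧ 3 ≤ nextSat s j₁) ∧ ((j₃ = 0 ∧ j₄ ≠ 0) ∨ (j₃ ≠ 0 ∧ j₄ = 0))) := by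
  simp only [WinCode, h, false_and, false_or, not_false_eq_true, true_and, and_or_left]

/-- Splitting on the first label: a nonzero label, or an untriggered left-to-right maximum, leaves
a three-step game; a triggered one must be followed by nonzero labels only. -/
lemma winCount_split (s : ℕ) : winCount s =
    (∑ j ∈ range s, winCount3 (j + 1)) +
      (if 8 ≤ s then
        ∑ j ∈ range (s + 1), ∑ j₃ ∈ range (j + 1 + 1), ∑ j₄ ∈ range (nextSat (j + 1) j₃ + 1),
          (if j₃ ≠ 0 ∧ j₄ ≠ 0 then (1 : ℤ) else 0)
      else winCount3 (s + 1)) := by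
  rw [winCount, sum_range_succ']
  congr 1
  · refine sum_congr rfl fun j _ => ?_
    have e : nextSat s (j + 1) = j + 1 := by simp [nextSat]
    simp only [e, winCount3]
    refine sum_congr rfl fun j₂ _ => sum_congr rfl fun j₃ _ => sum_congr rfl fun j₄ _ => ?_
    refine if_congr ?_ rfl rfl
    rw [winCode_of_not (by omega), e]
  · have e : nextSat s 0 = s + 1 := by simp [nextSat]
    simp only [e]
    split_ifs with h
    · rw [sum_range_succ']
      have e0 : ∀ j, nextSat (s + 1) (j + 1) = j + 1 := by simp [nextSat]
      simp only [WinCode, h, e0]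
      simp
    · rw [winCount3]
      refine sum_congr rfl fun j₂ _ => sum_congr rfl fun j₃ _ => sum_congr rfl fun j₄ _ => ?_
      refine if_congr ?_ rfl rfl
      rw [winCode_of_not (by omega), e]

/-- Continuations by three nonzero labels. -/
lemma six_mul_sum_no_zero (s : ℕ) :
    6 * (∑ j ∈ range s, ∑ j₃ ∈ range (j + 1 + 1), ∑ j₄ ∈ range (nextSat (j + 1) j₃ + 1),
          (if j₃ ≠ 0 ∧ j₄ ≠ 0 then (1 : ℤ) else 0)) = s * (s + 1) * (s + 2) := by
  induction s with
  | zero => simp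
  | succ s ih =>
    have := sum_no_zero (s + 1)
    rw [sum_range_succ, mul_add, ih]
    push_cast at this ⊢
    linear_combination 3 * this

lemma sum_winCount3_large (s : ℕ) :
    2 * ∑ j ∈ range (s + 2), winCount3 (j + 1) =
      (s : ℤ) ^ 3 + 11 * s ^ 2 + 38 * s + 46 := by
  induction s with
  | zero => simp [sum_range_succ, winCount3_small]
  | succ s ih =>
    rw [show s + 1 + 2 = (s + 2) + 1 by ring, sum_range_succ, mul_add, ih,
      winCount3_large (by omega)]
    push_cast; ring

lemma contCount_one (s : ℕ) : contCount 1 s = s + 1 := by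
  rw [contCount_succ, childSum_eq]; simp [contCount]; ring

lemma contCount_two (s : ℕ) : 2 * contCount 2 s = ((s : ℤ) + 1) * (s + 4) := by
  induction s with
  | zero => rw [contCount_succ_zero, contCount_one]; norm_num
  | succ s ih => rw [contCount_succ_succ, mul_add, ih, contCount_one]; push_cast; ring

lemma contCount_three (s : ℕ) : 6 * contCount 3 s = ((s : ℤ) + 1) * (s + 5) * (s + 6) := by
  induction s with
  | zero =>
    have := contCount_two 1
    rw [contCount_succ_zero]
    norm_num at this ⊢; omega
  | succ s ih =>
    have := contCount_two (s + 2)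
    rw [contCount_succ_succ, mul_add, ih]
    push_cast at this ⊢
    linear_combination 3 * this

/-- The continuation count in the basis of `contCount`s and point masses. Beyond `s = 7` both
thresholds are met and the two polynomials in `s` coincide; the coefficients of the point
masses are the defects for smaller `s`. -/
lemma winCount_decomp (s : ℕ) : winCount s =
    4 * contCount 3 s + (-9 * contCount 2 s + (2 * contCount 0 s +
      (4 * (if s = 0 then 1 else 0) + (10 * (if s = 1 then 1 else 0) +
      (15 * (if s = 2 then 1 else 0) + (19 * (if s = 3 then 1 else 0) +
      (21 * (if s = 4 then 1 else 0) + (20 * (if s = 5 then 1 else 0) +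
      (15 * (if s = 6 then 1 else 0) + 5 * (if s = 7 then 1 else 0)))))))))) := by
  have c3 := contCount_three s
  have c2 := contCount_two s
  have c0 : contCount 0 s = 1 := rfl
  rw [winCount_split]
  by_cases h : 8 ≤ s
  · obtain ⟨r, rfl⟩ := Nat.exists_eq_add_of_le' h
    have a := sum_winCount3_large (r + 6)
    have b := six_mul_sum_no_zero (r + 8 + 1)
    rw [if_pos h]
    simp only [show ∀ k, k < 8 → (r + 8 = k ↔ False) from fun k hk => by
      simp only [iff_false]; omega, Nat.reduceLT, Nat.ofNat_pos, Nat.one_lt_ofNat, if_false]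
    push_cast at a b c3 c2 ⊢
    have : (6 : ℤ) ≠ 0 := by norm_num
    apply mul_left_cancel₀ this
    linear_combination 3 * a + b - 4 * c3 + 27 * c2 - 12 * c0
  · have w1 := winCount3_small (t := 1) (by norm_num)
    have w2 := winCount3_small (t := 2) (by norm_num)
    have w3 := winCount3_large (t := 3) (by norm_num)
    have w4 := winCount3_large (t := 4) (by norm_num)
    have w5 := winCount3_large (t := 5) (by norm_num)
    have w6 := winCount3_large (t := 6) (by norm_num)
    have w7 := winCount3_large (t := 7) (by norm_num)
    have w8 := winCount3_large (t := 8) (by norm_num)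
    rw [if_neg h, c0, ← sum_range_succ (fun j => winCount3 (j + 1))]
    norm_num at w1 w2 w3 w4 w5 w6 w7 w8
    have hs : s < 8 := by omega
    clear c0 h
    interval_cases s <;> norm_num at c3 c2 <;> simp [sum_range_succ] <;> omega

/-- for `N ≥ 11`, the number of 321-avoiding permutations of size `N` won by
the `(1,4,9)` threshold strategy equals
`4C_{N-1} - 9C_{N-2} + 2C_{N-4} + 105C_{N-5} - 206C_{N-6} + 95C_{N-7} - 5C_{N-8}`. -/
theorem stmt11 {N : ℕ} (hN : 11 ≤ N) :
    (Nat.card {π : Equiv.Perm (Fin N) // Avoids321 ⇑π ∧ Wins149 ⇑π} : ℤ) =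
      4 * catalan (N - 1) - 9 * catalan (N - 2) + 2 * catalan (N - 4)
        + 105 * catalan (N - 5) - 206 * catalan (N - 6) + 95 * catalan (N - 7)
        - 5 * catalan (N - 8) := by
  obtain ⟨p, rfl⟩ := Nat.exists_eq_add_of_le' hN
  -- `N = n + 4` with `n = p + 7`
  rw [show p + 11 = (p + 7) + 4 by ring, card_wins, funext winCount_decomp]
  simp only [satSum_add, satSum_const_mul, satSum_contCount]
  change _ + (_ + (_ + (_ * satNum (p + 7) 0 + (_ * satNum (p + 7) 1 + (_ * satNum (p + 7) 2 +
    (_ * satNum (p + 7) 3 + (_ * satNum (p + 7) 4 + (_ * satNum (p + 7) 5 +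
    (_ * satNum (p + 7) 6 + _ * satNum (p + 7) 7)))))))))  = _
  simp only [satNum_succ_succ, satNum_succ_one, satNum_succ_zero, zero_add]
  simp only [show p + 7 + 4 - 1 = p + 10 by omega, show p + 7 + 4 - 2 = p + 9 by omega,
    show p + 7 + 4 - 4 = p + 7 by omega, show p + 7 + 4 - 5 = p + 6 by omega,
    show p + 7 + 4 - 6 = p + 5 by omega, show p + 7 + 4 - 7 = p + 4 by omega,
    show p + 7 + 4 - 8 = p + 3 by omega, Nat.add_assoc, Nat.reduceAdd]
  ring
end
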